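/- Inductive step for the least fixed point case of the main theorem: Let ⟨P, {→a}_{a∈L}⟩ be a PLTS, and let G₁ be a pLμ formula and X a variable such that μX.G₁ is in normal form. Assume the inductive hypothesis: for every interpretation ρ' : Var → (P → [0,1]) and every q ∈ P, ⟦G₁⟧ρ'(q) = Val↓(𝒢^{G₁}_{ρ'})(⟨q,G₁⟩) = Val↑(𝒢^{G₁}_{ρ'})(⟨q,G₁⟩). Then for every interpretation ρ and every p ∈ P, ⟦μX.G₁⟧ρ(p) = Val↓(𝒢^{μX.G₁}_ρ)(⟨p,μX.G₁⟩) = Val↑(𝒢^{μX.G₁}_ρ)(⟨p,μX.G₁⟩). -/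

import Mathlib

noncomputable section

open scoped unitInterval Classical

instance : Fact ((0:ℝ) ≤ 1) := ⟨zero_le_one⟩

/-- A discrete probability distribution on `X`: a `[0,1]`-valued (indeed nonnegative)
function summing to `1` (hence with countable support). -/
structure PDist (X : Type) where
  f : X → ℝ
  nonneg : ∀ x, 0 ≤ f x
  sum_one : HasSum f 1

/-- A probabilistic labeled transition system over labels `L` with states `P`:
for each label `a` and state `p`, the set of distributions `d` with `p →a d`. -/
structure PLTS (L P : Type) where
  trans : L → P → Set (PDist P)

/-- Formulas of the probabilistic modal μ-calculus, with variables drawn from `ℕ`. -/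
inductive pLmu (L : Type) : Type
  | var : ℕ → pLmu L
  | dia : L → pLmu L → pLmu L
  | box : L → pLmu L → pLmu L
  | or  : pLmu L → pLmu L → pLmu L
  | and : pLmu L → pLmu L → pLmu L
  | mu  : ℕ → pLmu L → pLmu L
  | nu  : ℕ → pLmu L → pLmu L

namespace pLmu

variable {L P : Type}

/-- free variables -/
def freeVars : pLmu L → Set ℕ
  | .var X => {X}
  | .dia _ G => freeVars G
  | .box _ G => freeVars G
  | .or G H => freeVars G ∪ freeVars H
  | .and G H => freeVars G ∪ freeVars H
  | .mu X G => freeVars G \ {X}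
  | .nu X G => freeVars G \ {X}

/-- the list of variables bound by the μ- and ν-binders occurring in a formula -/
def binders : pLmu L → List ℕ
  | .var _ => []
  | .dia _ G => binders G
  | .box _ G => binders G
  | .or G H => binders G ++ binders H
  | .and G H => binders G ++ binders H
  | .mu X G => X :: binders G
  | .nu X G => X :: binders G

/-- A formula is in normal form if every binder binds a distinct variable and no
variable occurs both free and bound. -/
def NormalForm (F : pLmu L) : Prop :=
  F.binders.Nodup ∧ ∀ X ∈ F.binders, X ∉ F.freeVars

/-- A formula is closed if it has no free variables. -/
def Closed (F : pLmu L) : Prop := F.freeVars = ∅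

/-- The expected value of `g : P → [0,1]` under a distribution `d` on `P`
(the real number `∑ q, d(q) · g(q)`, which lies in `[0,1]`, viewed in `[0,1]`). -/
def distExp (d : PDist P) (g : P → unitInterval) : unitInterval :=
  Set.projIcc 0 1 zero_le_one (∑' q, d.f q * (g q : ℝ))

/-- The denotational semantics `⟦F⟧ρ : P → [0,1]` of a pLμ formula, where least
(resp. greatest) fixed points are given, à la Knaster–Tarski, as the infimum of
prefixed points (resp. supremum of postfixed points) in the complete lattice `P → [0,1]`. -/
def sem (M : PLTS L P) : pLmu L → (ℕ → P → unitInterval) → P → unitInterval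
  | .var X, ρ, p => ρ X p
  | .dia a G, ρ, p => sSup ((fun d => distExp d (sem M G ρ)) '' M.trans a p)
  | .box a G, ρ, p => sInf ((fun d => distExp d (sem M G ρ)) '' M.trans a p)
  | .or G H, ρ, p => sem M G ρ p ⊔ sem M H ρ p
  | .and G H, ρ, p => sem M G ρ p ⊓ sem M H ρ p
  | .mu X G, ρ, p => sInf {g : P → unitInterval | sem M G (Function.update ρ X g) ≤ g} p
  | .nu X G, ρ, p => sSup {g : P → unitInterval | g ≤ sem M G (Function.update ρ X g)} p

end pLmu

noncomputable section

open scoped unitInterval Classical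

/-- The three agents of a 2½-player game. -/
inductive Player : Type
  | one : Player
  | two : Player
  | nature : Player
deriving DecidableEq

/-- A 2½-player arena: a directed graph `(S, E)`, an assignment of states to the
players (Player 1, Player 2, Nature), and probabilistic transition data at Nature
states. -/
structure Arena (S : Type) where
  E : S → Set S
  owner : S → Player
  prob : S → S → ℝ

namespace Arena

variable {S : Type}

/-- Well-formedness: at every Nature state `s`, `prob s` is a probability
distribution whose support is exactly the set `E s` of successors of `s`. -/
def Wellformed (A : Arena S) : Prop :=
  ∀ s, A.owner s = Player.nature →
    (∀ t, 0 ≤ A.prob s t) ∧ HasSum (A.prob s) 1 ∧ A.E s = Function.support (A.prob s)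

/-- `s` is a terminal state if it has no successors. -/
def Terminal (A : Arena S) (s : S) : Prop := A.E s = ∅

end Arena

/-- An (unbounded memory deterministic) strategy for player `pl` in arena `A`:
given the history `hist` and the current state `s` (a non-terminal state owned by
`pl`), it picks a successor of `s`. -/
structure Strategy {S : Type} (A : Arena S) (pl : Player) where
  next : List S → S → S
  valid : ∀ (hist : List S) (s : S), A.owner s = pl → A.E s ≠ ∅ → next hist s ∈ A.E s

variable {S : Type}

/-- The Markov chain determined by a strategy profile `(σ1, σ2)` and initial state
`s0`: the tree of finite paths from `s0` in which nodes ending in a Player 1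
(resp. Player 2) state are extended uniquely according to `σ1` (resp. `σ2`), nodes
ending in a Nature state branch fully over the successors, and (for the purpose of
encoding finite completed paths as infinite sequences) nodes ending in a terminal
state are extended by repeating the terminal state. -/
inductive MC (A : Arena S) (σ1 : Strategy A Player.one) (σ2 : Strategy A Player.two)
    (s0 : S) : List S → Prop
  | root : MC A σ1 σ2 s0 [s0]
  | one (l : List S) (s : S) : MC A σ1 σ2 s0 (l ++ [s]) → A.owner s = Player.one →
      A.E s ≠ ∅ → MC A σ1 σ2 s0 (l ++ [s, σ1.next l s])
  | two (l : List S) (s : S) : MC A σ1 σ2 s0 (l ++ [s]) → A.owner s = Player.two →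
      A.E s ≠ ∅ → MC A σ1 σ2 s0 (l ++ [s, σ2.next l s])
  | nature (l : List S) (s t : S) : MC A σ1 σ2 s0 (l ++ [s]) →
      A.owner s = Player.nature → t ∈ A.E s → MC A σ1 σ2 s0 (l ++ [s, t])
  | term (l : List S) (s : S) : MC A σ1 σ2 s0 (l ++ [s]) → A.E s = ∅ →
      MC A σ1 σ2 s0 (l ++ [s, s])

/-- The space of completed paths, encoded as infinite sequences of states
(a finite completed path, i.e. one ending in a terminal state, is encoded by
repeating its terminal state forever). -/
def PathSpace (S : Type) : Type := ℕ → S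

instance : MeasurableSpace (PathSpace S) :=
  @MeasurableSpace.pi ℕ (fun _ => S) (fun _ => ⊤)

/-- The basic cylinder set of completed paths extending a finite path. -/
def cyl (l : List S) : Set (PathSpace S) :=
  {u | ∀ i : Fin l.length, u i = l.get i}

/-- the probability of a single step -/
def stepProb (A : Arena S) (s t : S) : ℝ :=
  if A.owner s = Player.nature then A.prob s t else 1

/-- The product of the probabilities of the Nature steps along a finite path. -/
def pathProb (A : Arena S) : List S → ℝ
  | [] => 1
  | [_] => 1
  | s :: t :: l => stepProb A s t * pathProb A (t :: l)

/-- The weight assigned to a basic cylinder: the product of the probabilities of its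
Nature steps if the underlying finite path belongs to the Markov chain, `0` otherwise. -/
def cylWeight (A : Arena S) (σ1 : Strategy A Player.one) (σ2 : Strategy A Player.two)
    (s0 : S) (l : List S) : ℝ :=
  if MC A σ1 σ2 s0 l then pathProb A l else 0

/-- The Borel probability measure on completed paths induced by the Markov chain
`M^{s0}_{σ1,σ2}`: the unique probability measure assigning to every basic cylinder
its weight. -/
def pathMeasure (A : Arena S) (σ1 : Strategy A Player.one) (σ2 : Strategy A Player.two)
    (s0 : S) : MeasureTheory.Measure (PathSpace S) :=
  if h : ∃ μ : MeasureTheory.Measure (PathSpace S), MeasureTheory.IsProbabilityMeasure μ ∧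
      ∀ l : List S, l ≠ [] → μ (cyl l) = ENNReal.ofReal (cylWeight A σ1 σ2 s0 l)
  then h.choose else 0

/-- The payoff function induced by a parity structure `(pri, R)`: a completed path
reaching a terminal state gets the reward `R` of (the first occurrence of) that
terminal state; an infinite path gets `1` if the greatest priority occurring
infinitely often along it is even, and `0` otherwise. -/
def payoff (A : Arena S) (pri : S → ℕ) (R : S → ℝ) (u : PathSpace S) : ℝ :=
  if h : ∃ i, A.E (u i) = ∅ then R (u (Nat.find h))
  else if Even (sSup {n | {i | pri (u i) = n}.Infinite}) then 1 else 0

/-- The expected reward of Player 1 for the Markov chain `M^{s0}_{σ1,σ2}`: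
the integral of the payoff against the induced probability measure on paths. -/
def expReward (A : Arena S) (pri : S → ℕ) (R : S → ℝ) (σ1 : Strategy A Player.one)
    (σ2 : Strategy A Player.two) (s0 : S) : ℝ :=
  ∫ u, payoff A pri R u ∂(pathMeasure A σ1 σ2 s0)

/-- The lower value `Val↓` of the 2½-player parity game `⟨A, Φ_(pri,R)⟩`. -/
def lowerValue (A : Arena S) (pri : S → ℕ) (R : S → ℝ) (s : S) : ℝ :=
  ⨆ σ1 : Strategy A Player.one, ⨅ σ2 : Strategy A Player.two, expReward A pri R σ1 σ2 s

/-- The upper value `Val↑` of the 2½-player parity game `⟨A, Φ_(pri,R)⟩`. -/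
def upperValue (A : Arena S) (pri : S → ℕ) (R : S → ℝ) (s : S) : ℝ :=
  ⨅ σ2 : Strategy A Player.two, ⨆ σ1 : Strategy A Player.one, expReward A pri R σ1 σ2 s

/-- The Bellman functional `𝓕` on `S → ℝ` associated to the game `⟨A, Φ_(pri,R)⟩`. -/
def bellman (A : Arena S) (R : S → ℝ) (f : S → ℝ) : S → ℝ := fun s =>
  if A.E s = ∅ then R s
  else match A.owner s with
    | Player.one => sSup (f '' A.E s)
    | Player.two => sInf (f '' A.E s)
    | Player.nature => ∑' t : A.E s, A.prob s t * f t
namespace pLmu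

variable {L P : Type}

/-- the number of connectives of a formula -/
def size : pLmu L → ℕ
  | .var _ => 1
  | .dia _ G => size G + 1
  | .box _ G => size G + 1
  | .or G H => size G + size H + 1
  | .and G H => size G + size H + 1
  | .mu _ G => size G + 1
  | .nu _ G => size G + 1

/-- `varInfo F d X` looks up the (leftmost outermost) binder binding `X` in `F`,
returning `some (d', b)` where `d'` is the depth (starting from `d`) at which the
binder occurs and `b` is `true` for a μ-binder and `false` for a ν-binder, and
`none` if `X` is not bound in `F`. -/
def varInfo : pLmu L → ℕ → ℕ → Option (ℕ × Bool)
  | .var _, _, _ => none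
  | .dia _ G, d, X => varInfo G (d+1) X
  | .box _ G, d, X => varInfo G (d+1) X
  | .or G H, d, X => (varInfo G (d+1) X).orElse (fun _ => varInfo H (d+1) X)
  | .and G H, d, X => (varInfo G (d+1) X).orElse (fun _ => varInfo H (d+1) X)
  | .mu Y G, d, X => if Y = X then some (d, true) else varInfo G (d+1) X
  | .nu Y G, d, X => if Y = X then some (d, false) else varInfo G (d+1) X

/-- `bodyOf F X` is the body of the (leftmost outermost) binder binding `X` in `F`,
if any. -/
def bodyOf : pLmu L → ℕ → Option (pLmu L)
  | .var _, _ => none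
  | .dia _ G, X => bodyOf G X
  | .box _ G, X => bodyOf G X
  | .or G H, X => (bodyOf G X).orElse (fun _ => bodyOf H X)
  | .and G H, X => (bodyOf G X).orElse (fun _ => bodyOf H X)
  | .mu Y G, X => if Y = X then some G else bodyOf G X
  | .nu Y G, X => if Y = X then some G else bodyOf G X

end pLmu

/-- The states of the game `𝒢^F_ρ`: pairs of a process state or a distribution on
process states, and a (sub)formula. -/
abbrev GState (L P : Type) : Type := (P ⊕ PDist P) × pLmu L

/-- The arena of the 2½-player parity game `𝒢^F_ρ` associated to a PLTS `M`
and a formula `F`. -/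
def gameArena (M : PLTS L P) (F : pLmu L) : Arena (GState L P) where
  E := fun s =>
    match s with
    | (Sum.inl p, .var X) =>
        match pLmu.bodyOf F X with
        | some H => {((Sum.inl p : P ⊕ PDist P), H)}
        | none => ∅
    | (Sum.inl p, .dia a G) => (fun d => ((Sum.inr d : P ⊕ PDist P), G)) '' M.trans a p
    | (Sum.inl p, .box a G) => (fun d => ((Sum.inr d : P ⊕ PDist P), G)) '' M.trans a p
    | (Sum.inl p, .or G H) => {((Sum.inl p : P ⊕ PDist P), G), ((Sum.inl p : P ⊕ PDist P), H)}
    | (Sum.inl p, .and G H) => {((Sum.inl p : P ⊕ PDist P), G), ((Sum.inl p : P ⊕ PDist P), H)}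
    | (Sum.inl p, .mu _ G) => {((Sum.inl p : P ⊕ PDist P), G)}
    | (Sum.inl p, .nu _ G) => {((Sum.inl p : P ⊕ PDist P), G)}
    | (Sum.inr d, G) => (fun q => ((Sum.inl q : P ⊕ PDist P), G)) '' Function.support d.f
  owner := fun s =>
    match s with
    | (Sum.inl _, .var X) =>
        match pLmu.varInfo F 0 X with
        | some (_, true) => Player.one
        | some (_, false) => Player.two
        | none => Player.one
    | (Sum.inl _, .dia _ _) => Player.one
    | (Sum.inl _, .box _ _) => Player.two
    | (Sum.inl _, .or _ _) => Player.one
    | (Sum.inl _, .and _ _) => Player.two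
    | (Sum.inl _, .mu _ _) => Player.one
    | (Sum.inl _, .nu _ _) => Player.two
    | (Sum.inr _, _) => Player.nature
  prob := fun s t =>
    match s, t with
    | (Sum.inr d, G), (Sum.inl q, G') => if G' = G then d.f q else 0
    | _, _ => 0

/-- The priority assignment of the game `𝒢^F_ρ`: a state `⟨p, X⟩` with `X` bound
in `F` at binder depth `d` gets the positive priority `2(|F| - d) + 1` if `X` is a
μ-variable and `2(|F| - d)` if `X` is a ν-variable (so that μ-variables get odd and
ν-variables get even priorities, and variables subsuming others get greater
priorities); all other states get priority `0`. -/
def gamePri (F : pLmu L) : GState L P → ℕ := fun s =>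
  match s with
  | (Sum.inl _, .var X) =>
      match pLmu.varInfo F 0 X with
      | some (d, true) => 2 * (F.size - d) + 1
      | some (d, false) => 2 * (F.size - d)
      | none => 0
  | _ => 0

/-- The terminal reward assignment of the game `𝒢^F_ρ`: a terminal state `⟨p, X⟩`
(with `X` free in `F`) gets reward `ρ(X)(p)`; a terminal state `⟨p, ⟨a⟩G⟩` gets
reward `0` and a terminal state `⟨p, [a]G⟩` gets reward `1`. -/
def gameR (F : pLmu L) (ρ : ℕ → P → unitInterval) : GState L P → ℝ := fun s =>
  match s with
  | (Sum.inl p, .var X) => (ρ X p : ℝ)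
  | (Sum.inl _, .dia _ _) => 0
  | (Sum.inl _, .box _ _) => 1
  | _ => 0

section MuCaseHelpers
open MeasureTheory ProbabilityTheory

/-- history dependent random process -/
abbrev Proc (S : Type) := List S → S → PMF S

def Proc.tail (K : Proc S) (s : S) : Proc S := fun l => K (s :: l)

def Wt : Proc S → S → List S → ENNReal
  | _, _, [] => 1
  | K, s, x :: l => K [] s x * Wt (K.tail s) x l

def pcons (s : S) (u : PathSpace S) : PathSpace S := fun n => Nat.casesOn n s u

@[simp] lemma pcons_zero (s : S) (u : PathSpace S) : pcons s u 0 = s := rfl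
@[simp] lemma pcons_succ (s : S) (u : PathSpace S) (n : ℕ) : pcons s u (n+1) = u n := rfl

lemma measurableSet_coord (i : ℕ) (A : Set S) : MeasurableSet {u : PathSpace S | u i ∈ A} := by
  have : @Measurable (PathSpace S) S _ ⊤ (fun u => u i) :=
    @measurable_pi_apply ℕ (fun _ => S) (fun _ => ⊤) i
  exact this (t := A) trivial

lemma measurable_coord (i : ℕ) : @Measurable (PathSpace S) S _ ⊤ (fun u => u i) :=
  @measurable_pi_apply ℕ (fun _ => S) (fun _ => ⊤) i

lemma measurable_toPath {Ω : Type} [MeasurableSpace Ω] {f : Ω → PathSpace S}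
    (h : ∀ i (A : Set S), MeasurableSet {w | f w i ∈ A}) : Measurable f := by
  refine @measurable_pi_iff Ω ℕ (fun _ => S) _ (fun _ => ⊤) f |>.2 fun i => ?_
  intro A _
  exact h i A

lemma measurable_pcons (s : S) : Measurable (pcons s) := by
  apply measurable_toPath
  intro i A
  cases i with
  | zero => simp
  | succ n => exact measurableSet_coord n A

lemma mem_cyl_nil (u : PathSpace S) : u ∈ cyl ([] : List S) := by
  intro i; exact i.elim0

lemma mem_cyl_cons (u : PathSpace S) (s : S) (l : List S) :
    u ∈ cyl (s :: l) ↔ u 0 = s ∧ (fun n => u (n+1)) ∈ cyl l := by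
  constructor
  · intro h
    exact ⟨h ⟨0, by simp⟩, fun i => h ⟨i.1 + 1, by simp⟩⟩
  · rintro ⟨h0, h1⟩ ⟨i, hi⟩
    cases i with
    | zero => exact h0
    | succ n => exact h1 ⟨n, by simpa using hi⟩

lemma pcons_mem_cyl (u : PathSpace S) (s t : S) (l : List S) :
    pcons s u ∈ cyl (t :: l) ↔ s = t ∧ u ∈ cyl l := by
  rw [mem_cyl_cons]; rfl

lemma measurableSet_cyl (l : List S) : MeasurableSet (cyl l) := by
  have : cyl l = ⋂ i : Fin l.length, {u : PathSpace S | u i ∈ ({l.get i} : Set S)} := by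
    ext u; simp [cyl]
  rw [this]
  exact MeasurableSet.iInter fun i => measurableSet_coord _ _

lemma cyl_agree {u v : PathSpace S} {l : List S} (hu : u ∈ cyl l) (hv : v ∈ cyl l) (i : ℕ)
    (hi : i < l.length) : u i = v i := (hu ⟨i, hi⟩).trans (hv ⟨i, hi⟩).symm

lemma cyl_nonempty (s : S) (l : List S) : ∃ u : PathSpace S, u ∈ cyl l := by
  induction l with
  | nil => exact ⟨fun _ => s, mem_cyl_nil _⟩
  | cons x l ih =>
    obtain ⟨u, hu⟩ := ih
    exact ⟨pcons x u, (pcons_mem_cyl _ _ _ _).2 ⟨rfl, hu⟩⟩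

lemma cyl_inj {u : PathSpace S} {l l' : List S} (hl : l.length = l'.length) (h : u ∈ cyl l)
    (h' : u ∈ cyl l') : l = l' := by
  apply List.ext_get hl
  intro n h1 h2
  exact (h ⟨n, h1⟩).symm.trans (h' ⟨n, h2⟩)

def listEquiv : Unit ⊕ (S × List S) ≃ List S where
  toFun o := match o with | .inl _ => [] | .inr (x, l) => x :: l
  invFun l := match l with | [] => .inl () | x :: l => .inr (x, l)
  left_inv o := by rcases o with _ | ⟨x, l⟩ <;> rfl
  right_inv l := by cases l <;> rfl

lemma tsum_list (f : List S → ENNReal) : ∑' l, f l = f [] + ∑' x, ∑' l, f (x :: l) := by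
  rw [← listEquiv.tsum_eq, Summable.tsum_sum ENNReal.summable ENNReal.summable]
  congr 1
  · simp [listEquiv]
  · exact ENNReal.tsum_prod (f := fun x l => f (x :: l))

lemma sum_Wt (n : ℕ) : ∀ (K : Proc S) (s : S),
    ∑' l : List S, (if l.length = n then Wt K s l else 0) = 1 := by
  induction n with
  | zero =>
    intro K s
    rw [tsum_list]
    simp [Wt]
  | succ n ih =>
    intro K s
    rw [tsum_list]
    have : ∀ x, ∑' l : List S, (if (x :: l).length = n + 1 then Wt K s (x :: l) else 0) =
        K [] s x := by
      intro x
      have h2 : ∀ l : List S, (if (x :: l).length = n + 1 then Wt K s (x :: l) else 0) =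
         K [] s x * (if l.length = n then Wt (K.tail s) x l else 0) := by
        intro l
        by_cases h : l.length = n <;> simp [h, Wt]
      simp_rw [h2]
      rw [ENNReal.tsum_mul_left, ih, mul_one]
    simp_rw [this]
    simp [PMF.tsum_coe]

/-- sets depending on the first `n+1` coordinates -/
def DetBy (n : ℕ) (B : Set (PathSpace S)) : Prop :=
  ∀ u v : PathSpace S, (∀ i ≤ n, u i = v i) → u ∈ B → v ∈ B

lemma sum_le_of_ge {K : Proc S} {s : S} {μ : Measure (PathSpace S)}
    (h : ∀ l, Wt K s l ≤ μ (cyl (s :: l))) (n : ℕ) (B : Set (PathSpace S)) :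
    ∑' l : List S, (if l.length = n ∧ cyl (s :: l) ⊆ B then Wt K s l else 0) ≤ μ B := by
  let As : List S → Set (PathSpace S) := fun l =>
    if l.length = n ∧ cyl (s :: l) ⊆ B then cyl (s :: l) else ∅
  have h1 : ∀ l, MeasurableSet (As l) := by
    intro l; simp only [As]; split_ifs
    · exact measurableSet_cyl _
    · exact MeasurableSet.empty
  have h2 : Pairwise (Function.onFun Disjoint As) := by
    intro l l' hne
    simp only [Function.onFun, As]
    split_ifs with ha hb
    · rw [Set.disjoint_left]
      intro u hu hu'
      have := cyl_inj (by simp [ha.1, hb.1]) hu hu'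
      exact hne (by simpa using this)
    all_goals simp
  calc _ ≤ ∑' l, μ (As l) := by
        apply ENNReal.tsum_le_tsum
        intro l
        simp only [As]
        split_ifs
        · exact h l
        · simp
    _ ≤ μ (⋃ l, As l) := tsum_meas_le_meas_iUnion_of_disjoint μ h1 h2
    _ ≤ μ B := by
        apply measure_mono
        apply Set.iUnion_subset
        intro l; simp only [As]; split_ifs with hl
        · exact hl.2
        · simp

lemma meas_eq_of_ge {K : Proc S} {s : S} {μ : Measure (PathSpace S)} [IsProbabilityMeasure μ]
    (h : ∀ l, Wt K s l ≤ μ (cyl (s :: l))) (n : ℕ) (B : Set (PathSpace S)) (hB : DetBy n B)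
    (hBm : MeasurableSet B) :
    μ B = ∑' l : List S, (if l.length = n ∧ cyl (s :: l) ⊆ B then Wt K s l else 0) := by
  set a := ∑' l : List S, (if l.length = n ∧ cyl (s :: l) ⊆ B then Wt K s l else 0) with ha
  set b := ∑' l : List S, (if l.length = n ∧ cyl (s :: l) ⊆ Bᶜ then Wt K s l else 0) with hb
  have h1 : a ≤ μ B := sum_le_of_ge h n B
  have h2 : b ≤ μ Bᶜ := sum_le_of_ge h n Bᶜ
  have h3 : 1 ≤ a + b := by
    rw [← sum_Wt n K s, ha, hb, ← ENNReal.tsum_add]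
    apply ENNReal.tsum_le_tsum
    intro l
    by_cases hl : l.length = n
    · have : cyl (s :: l) ⊆ B ∨ cyl (s :: l) ⊆ Bᶜ := by
        by_contra hc
        push Not at hc
        obtain ⟨hc1, hc2⟩ := hc
        rw [Set.not_subset] at hc1 hc2
        obtain ⟨u, hu, hu'⟩ := hc1
        obtain ⟨v, hv, hv'⟩ := hc2
        apply hu'
        refine hB v u (fun i hi => cyl_agree hv hu i (by simp; omega)) (by simpa using hv')
      rcases this with h | h <;> simp [hl, h]
    · simp [hl]
  have h4 : μ B + μ Bᶜ = 1 := prob_add_prob_compl hBm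
  apply le_antisymm _ h1
  have hbf : b ≠ ⊤ := ne_top_of_le_ne_top (measure_ne_top μ _) h2
  have : μ B + b ≤ a + b := by
    calc μ B + b ≤ μ B + μ Bᶜ := by gcongr
      _ = 1 := h4
      _ ≤ _ := h3
  exact (ENNReal.add_le_add_iff_right hbf).1 this

lemma meas_unique {K : Proc S} {s : S} {μ ν : Measure (PathSpace S)} [IsProbabilityMeasure μ]
    [IsProbabilityMeasure ν]
    (h : ∀ l, Wt K s l ≤ μ (cyl (s :: l))) (h' : ∀ l, Wt K s l ≤ ν (cyl (s :: l))) : μ = ν := by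
  let C : Set (Set (PathSpace S)) := {B | MeasurableSet B ∧ ∃ n, DetBy n B}
  refine ext_of_generate_finite C ?_ ?_ ?_ (by simp)
  · apply le_antisymm
    · change (⨆ i, MeasurableSpace.comap (fun u : ℕ → S => u i) ⊤) ≤ _
      apply iSup_le
      rintro i B ⟨A, _, rfl⟩
      apply MeasurableSpace.measurableSet_generateFrom
      refine ⟨measurableSet_coord i A, i, ?_⟩
      intro u v huv hu
      have := huv i le_rfl
      change v i ∈ A
      rw [← this]; exact hu
    · apply MeasurableSpace.generateFrom_le
      intro B hB; exact hB.1
  · rintro B ⟨hB, n, hn⟩ B' ⟨hB', n', hn'⟩ _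
    refine ⟨hB.inter hB', max n n', ?_⟩
    intro u v huv hu
    exact ⟨hn u v (fun i hi => huv i (le_max_of_le_left hi)) hu.1,
      hn' u v (fun i hi => huv i (le_max_of_le_right hi)) hu.2⟩
  · rintro B ⟨hB, n, hn⟩
    rw [meas_eq_of_ge h n B hn hB, meas_eq_of_ge h' n B hn hB]

lemma detBy_cyl (s : S) (l : List S) : DetBy l.length (cyl (s :: l)) := by
  intro u v huv hu i
  rw [← hu i, huv]
  have := i.2
  simp only [List.length_cons] at this
  omega

lemma cyl_eq_of_ge {K : Proc S} {s : S} {μ : Measure (PathSpace S)} [IsProbabilityMeasure μ]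
    (h : ∀ l, Wt K s l ≤ μ (cyl (s :: l))) (l : List S) : μ (cyl (s :: l)) = Wt K s l := by
  rw [meas_eq_of_ge h l.length _ (detBy_cyl s l) (measurableSet_cyl _), tsum_eq_single l]
  · simp
  · intro l' hl'
    rw [if_neg]
    rintro ⟨h1, h2⟩
    obtain ⟨u, hu⟩ := cyl_nonempty s (s :: l')
    have := cyl_inj (by simp [h1]) hu (h2 hu)
    exact hl' (by simpa using this)

end MuCaseHelpers

section MuCaseHelpers2
open MeasureTheory ProbabilityTheory

/-- states of the auxiliary Markov chain: history and current state -/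
structure HS (S : Type) where
  hist : List S
  cur : S

instance : MeasurableSpace (HS S) := ⊤

def hstep (K : Proc S) (z : HS S) : PMF (HS S) :=
  (K z.hist z.cur).map (fun x => ⟨z.hist ++ [z.cur], x⟩)

lemma hstep_apply (K : Proc S) (l : List S) (s x : S) :
    hstep K ⟨l, s⟩ ⟨l ++ [s], x⟩ = K l s x := by
  unfold hstep
  rw [PMF.map_apply, tsum_eq_single x]
  · simp
  · intro y hy
    rw [if_neg]
    intro h
    exact hy (by simpa using h.symm)

def hkern (K : Proc S) (n : ℕ) : Kernel ((i : Finset.Iic n) → HS S) (HS S) where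
  toFun y := (hstep K (y ⟨n, by simp⟩)).toMeasure
  measurable' := by
    have h1 : Measurable (fun z : HS S => (hstep K z).toMeasure) := measurable_from_top
    exact h1.comp (measurable_pi_apply _)

instance (K : Proc S) (n : ℕ) : IsMarkovKernel (hkern K n) :=
  ⟨fun _ => PMF.toMeasure.isProbabilityMeasure _⟩

instance : MeasurableSingletonClass (HS S) := ⟨fun _ => trivial⟩

def hset (z : ℕ → HS S) (n : ℕ) : Set (ℕ → HS S) := {x | ∀ i ≤ n, x i = z i}

lemma measurableSet_hset (z : ℕ → HS S) (n : ℕ) : MeasurableSet (hset z n) := by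
  have : hset z n = ⋂ i, ⋂ (_ : i ≤ n), (fun x : ℕ → HS S => x i) ⁻¹' {z i} := by
    ext x; simp [hset]
  rw [this]
  exact MeasurableSet.iInter fun i => MeasurableSet.iInter fun _ =>
    (measurable_pi_apply i) (measurableSet_singleton _)

def hmeas (K : Proc S) (s : S) : Measure (ℕ → HS S) :=
  Kernel.traj (X := fun _ => HS S) (hkern K) 0 (fun _ => ⟨[], s⟩)

instance (K : Proc S) (s : S) : IsProbabilityMeasure (hmeas K s) := by
  unfold hmeas; infer_instance

lemma hmeas_zero (K : Proc S) (s : S) (z : ℕ → HS S) (hz : z 0 = ⟨[], s⟩) :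
    hmeas K s (hset z 0) = 1 := by
  have h := Kernel.traj_map_frestrictLe_apply (X := fun _ => HS S) (κ := hkern K) 0 0
    (fun _ => ⟨[], s⟩)
  rw [Kernel.partialTraj_self, Kernel.id_apply] at h
  have h2 : hset z 0 = (Preorder.frestrictLe (π := fun _ => HS S) 0) ⁻¹'
      {(fun i => z i : (i : Finset.Iic 0) → HS S)} := by
    ext x
    simp only [hset, Set.mem_ofPred_eq, Set.mem_preimage, Set.mem_singleton_iff, funext_iff,
      Preorder.frestrictLe_apply, Subtype.forall, Finset.mem_Iic]
  rw [h2, ← Measure.map_apply (by fun_prop) (measurableSet_singleton _)]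
  unfold hmeas
  rw [h, Measure.dirac_apply' _ (measurableSet_singleton _), Set.indicator_of_mem]
  · rfl
  · simp only [Set.mem_singleton_iff]
    funext ⟨i, hi⟩
    have : i = 0 := by simpa using hi
    subst this
    exact hz.symm

lemma hmeas_succ (K : Proc S) (s : S) (z : ℕ → HS S) (n : ℕ) :
    hmeas K s (hset z n) * hstep K (z n) (z (n+1)) ≤ hmeas K s (hset z (n+1)) := by
  set x0 : (i : Finset.Iic 0) → HS S := (fun _ => ⟨[], s⟩)
  have h := Kernel.traj_map_frestrictLe_apply (X := fun _ => HS S) (κ := hkern K) 0 n x0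
  let zn : (i : Finset.Iic n) → HS S := fun i => z i
  have h2 : hset z n = (Preorder.frestrictLe (π := fun _ => HS S) n) ⁻¹' {zn} := by
    ext x
    simp only [hset, Set.mem_ofPred_eq, Set.mem_preimage, Set.mem_singleton_iff, funext_iff,
      Preorder.frestrictLe_apply, Subtype.forall, Finset.mem_Iic, zn]
  have h3 : hmeas K s (hset z n) = Kernel.partialTraj (X := fun _ => HS S) (hkern K) 0 n x0 {zn} := by
    rw [h2, ← Measure.map_apply (by fun_prop) (measurableSet_singleton _), ← h]
    rfl
  have h4 : Kernel.traj (X := fun _ => HS S) (hkern K) n zn (hset z (n+1))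
      = hstep K (z n) (z (n+1)) := by
    have e1 : Kernel.traj (X := fun _ => HS S) (hkern K) n zn (hset z n)ᶜ = 0 := by
      have := Kernel.traj_map_frestrictLe_apply (X := fun _ => HS S) (κ := hkern K) n n zn
      rw [Kernel.partialTraj_self, Kernel.id_apply] at this
      rw [h2, ← Set.preimage_compl, ← Measure.map_apply (by fun_prop)
        (measurableSet_singleton _).compl, this,
        Measure.dirac_apply' _ (measurableSet_singleton _).compl]
      exact Set.indicator_of_notMem (by simp) _
    have e2 : Kernel.traj (X := fun _ => HS S) (hkern K) n zn
        ((fun x : ℕ → HS S => x (n+1)) ⁻¹' {z (n+1)}) = hstep K (z n) (z (n+1)) := by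
      have := Kernel.map_traj_succ_self (X := fun _ => HS S) (κ := hkern K) (a := n)
      have h5 := congrArg (fun k => k zn {z (n+1)}) this
      rw [Kernel.map_apply _ (by fun_prop), Measure.map_apply (by fun_prop)
        (measurableSet_singleton _)] at h5
      rw [h5]
      change (hstep K (z n)).toMeasure {z (n+1)} = _
      rw [PMF.toMeasure_apply_singleton _ _ (measurableSet_singleton _)]
    rw [← e2]
    have e3 : hset z (n+1) = ((fun x : ℕ → HS S => x (n+1)) ⁻¹' {z (n+1)}) ∩ hset z n := by
      ext x
      simp only [hset, Set.mem_ofPred_eq, Set.mem_inter_iff, Set.mem_preimage,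
        Set.mem_singleton_iff]
      constructor
      · intro h; exact ⟨h _ le_rfl, fun i hi => h i (by omega)⟩
      · rintro ⟨h1, h2⟩ i hi
        rcases Nat.lt_or_ge n i with h | h
        · have : i = n + 1 := by omega
          rw [this]; exact h1
        · exact h2 i h
    rw [e3]
    exact measure_inter_conull e1
  have h5 : hmeas K s (hset z (n+1)) = ∫⁻ y, Kernel.traj (X := fun _ => HS S) (hkern K) n y
      (hset z (n+1)) ∂(Kernel.partialTraj (X := fun _ => HS S) (hkern K) 0 n x0) := by
    unfold hmeas
    rw [← Kernel.traj_comp_partialTraj (Nat.zero_le n),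
      Kernel.comp_apply' _ _ _ (measurableSet_hset _ _)]
  rw [h5, h3, ← h4, mul_comm]
  rw [← lintegral_singleton (fun y => Kernel.traj (X := fun _ => HS S) (hkern K) n y
      (hset z (n+1)))]
  exact setLIntegral_le_lintegral _ _

lemma Wt_snoc (x : S) (l : List S) : ∀ (K : Proc S) (s : S) (m : List S) (t : S),
    s :: l = m ++ [t] → Wt K s (l ++ [x]) = Wt K s l * K m t x := by
  induction l with
  | nil =>
    intro K s m t h
    have h' : [] ++ [s] = m ++ [t] := h
    obtain ⟨rfl, h2⟩ := List.append_inj' h' rfl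
    have : s = t := by simpa using h2
    subst this
    simp [Wt]
  | cons y l ih =>
    intro K s m t h
    cases m with
    | nil => simp at h
    | cons a m =>
      have h1 : s = a := by simpa using congrArg List.head? h
      subst h1
      have h2 : y :: l = m ++ [t] := by simpa using h
      simp only [List.cons_append, Wt]
      rw [ih (K.tail s) y m t h2, mul_assoc]
      rfl

def zof (s : S) (l : List S) (n : ℕ) : HS S := ⟨(s :: l).take n, (s :: l).getD n s⟩

lemma Wt_le_hmeas (K : Proc S) (s : S) (l : List S) (n : ℕ) (hn : n ≤ l.length) :
    Wt K s (l.take n) ≤ hmeas K s (hset (zof s l) n) := by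
  induction n with
  | zero =>
    rw [hmeas_zero _ _ _ (by simp [zof])]
    simp [Wt]
  | succ n ih =>
    have hn' : n < l.length := hn
    refine le_trans (le_of_eq ?_) ((mul_le_mul_left (ih (by omega)) _).trans (hmeas_succ _ _ _ _))
    have e : (s :: l).take (n+1) = (s :: l).take n ++ [(s :: l).getD n s] := by
      rw [List.take_succ_eq_append_getElem (by simp; omega)]
      simp [Nat.lt_succ_of_lt hn']
    rw [List.take_succ_eq_append_getElem hn']
    rw [Wt_snoc _ _ K s ((s :: l).take n) ((s :: l).getD n s) (by rw [← e]; simp)]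
    congr 1
    have e2 : zof s l (n+1) = ⟨(s :: l).take n ++ [(s :: l).getD n s], l[n]⟩ := by
      unfold zof
      rw [e]
      simp [hn']
    rw [e2]
    unfold zof
    rw [hstep_apply]

def hpath (x : ℕ → HS S) : PathSpace S := fun n => (x n).cur

/-- the path measure of a process -/
def pm (K : Proc S) (s : S) : Measure (PathSpace S) :=
  (hmeas K s).map hpath

lemma measurable_hpath : Measurable (hpath (S := S)) := by
  apply measurable_toPath
  intro i A
  have : {w : ℕ → HS S | (w i).cur ∈ A} = (fun w => w i) ⁻¹' {z | z.cur ∈ A} := rfl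
  change MeasurableSet {w : ℕ → HS S | (w i).cur ∈ A}
  rw [this]
  exact measurable_pi_apply i trivial

instance (K : Proc S) (s : S) : IsProbabilityMeasure (pm K s) :=
  Measure.isProbabilityMeasure_map measurable_hpath.aemeasurable

lemma Wt_le_pm (K : Proc S) (s : S) (l : List S) : Wt K s l ≤ pm K s (cyl (s :: l)) := by
  unfold pm
  rw [Measure.map_apply measurable_hpath (measurableSet_cyl _)]
  have := Wt_le_hmeas K s l l.length le_rfl
  rw [List.take_length] at this
  refine this.trans (measure_mono ?_)
  intro x hx i
  have hi := i.2
  simp only [List.length_cons] at hi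
  have := hx i (by omega)
  change (x i).cur = _
  rw [this]
  simp only [zof]
  rw [List.getD_eq_getElem _ _ (by simp; omega)]
  rfl

lemma pm_cyl (K : Proc S) (s : S) (l : List S) : pm K s (cyl (s :: l)) = Wt K s l :=
  cyl_eq_of_ge (Wt_le_pm K s) l

lemma pm_unique {K : Proc S} {s : S} {μ : Measure (PathSpace S)} [IsProbabilityMeasure μ]
    (h : ∀ l, Wt K s l ≤ μ (cyl (s :: l))) : μ = pm K s := meas_unique h (Wt_le_pm K s)

lemma pm_eq_sum (K : Proc S) (s : S) :
    pm K s = Measure.sum (fun x => K [] s x • (pm (K.tail s) x).map (pcons s)) := by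
  symm
  have hp : ∀ x, IsProbabilityMeasure ((pm (K.tail s) x).map (pcons s)) := fun x =>
    Measure.isProbabilityMeasure_map (measurable_pcons s).aemeasurable
  have : IsProbabilityMeasure
      (Measure.sum (fun x => K [] s x • (pm (K.tail s) x).map (pcons s))) := by
    constructor
    rw [Measure.sum_apply _ MeasurableSet.univ]
    simp [PMF.tsum_coe]
  apply pm_unique
  intro l
  rw [Measure.sum_apply _ (measurableSet_cyl _)]
  cases l with
  | nil =>
    have : ∀ x, ((pm (K.tail s) x).map (pcons s)) (cyl [s]) = 1 := by
      intro x
      rw [Measure.map_apply (measurable_pcons s) (measurableSet_cyl _)]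
      have : pcons s ⁻¹' cyl [s] = Set.univ := by
        ext u; simp [pcons_mem_cyl, mem_cyl_nil]
      rw [this]; simp
    simp [this, PMF.tsum_coe, Wt]
  | cons x l =>
    refine le_trans (le_of_eq ?_) (ENNReal.le_tsum x)
    simp only [Measure.smul_apply, smul_eq_mul, Wt]
    rw [Measure.map_apply (measurable_pcons s) (measurableSet_cyl _)]
    have : pcons s ⁻¹' cyl (s :: x :: l) = cyl (x :: l) := by
      ext u; simp [pcons_mem_cyl]
    rw [this, pm_cyl]

/-- master equation -/
lemma lintegral_pm (K : Proc S) (s : S) {φ : PathSpace S → ENNReal} (hφ : Measurable φ) :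
    ∫⁻ u, φ u ∂(pm K s) = ∑' x, K [] s x * ∫⁻ u, φ (pcons s u) ∂(pm (K.tail s) x) := by
  rw [pm_eq_sum, lintegral_sum_measure]
  congr 1
  funext x
  rw [lintegral_smul_measure, lintegral_map hφ (measurable_pcons s), smul_eq_mul]

lemma lintegral_pm_pure (K : Proc S) (s t : S) (h : K [] s = PMF.pure t)
    {φ : PathSpace S → ENNReal} (hφ : Measurable φ) :
    ∫⁻ u, φ u ∂(pm K s) = ∫⁻ u, φ (pcons s u) ∂(pm (K.tail s) t) := by
  rw [lintegral_pm K s hφ, h, tsum_eq_single t]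
  · simp
  · intro x hx
    simp [hx]

lemma lintegral_pm_const (K : Proc S) (s : S) {φ : PathSpace S → ENNReal} (hφ : Measurable φ)
    (c : ENNReal) (h : ∀ u, φ (pcons s u) = c) : ∫⁻ u, φ u ∂(pm K s) = c := by
  rw [lintegral_pm K s hφ]
  simp [h, ENNReal.tsum_mul_right, PMF.tsum_coe]

lemma pm_congr {K K' : Proc S} {s : S} (h0 : K [] s = K' [] s) (h : K.tail s = K'.tail s) :
    pm K s = pm K' s := by
  rw [pm_eq_sum, pm_eq_sum, h0, h]

end MuCaseHelpers2

section MuCaseHelpers3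
open MeasureTheory ProbabilityTheory

def haltPath (T : Set S) (u : PathSpace S) : PathSpace S := fun n =>
  Nat.rec (u 0) (fun n r => if r ∈ T then r else u (n+1)) n

lemma haltPath_zero (T : Set S) (u : PathSpace S) : haltPath T u 0 = u 0 := rfl

lemma haltPath_succ (T : Set S) (u : PathSpace S) (n : ℕ) :
    haltPath T u (n+1) = if haltPath T u n ∈ T then haltPath T u n else u (n+1) := rfl

lemma measurable_haltPath (T : Set S) : Measurable (haltPath T) := by
  apply measurable_toPath
  intro i
  induction i with
  | zero => intro A; exact measurableSet_coord 0 A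
  | succ n ih =>
    intro A
    have : {w | haltPath T w (n+1) ∈ A} = {w | haltPath T w n ∈ T ∩ A} ∪
        ({w | haltPath T w n ∈ T}ᶜ ∩ {w : PathSpace S | w (n+1) ∈ A}) := by
      ext w
      simp only [Set.mem_ofPred_eq, haltPath_succ, Set.mem_union, Set.mem_inter_iff,
        Set.mem_compl_iff]
      split_ifs with h <;> simp [h]
    rw [this]
    exact (ih _).union ((ih _).compl.inter (measurableSet_coord _ _))

lemma haltPath_cons_mem {T : Set S} {s : S} (h : s ∈ T) (u : PathSpace S) (n : ℕ) :
    haltPath T (pcons s u) n = s := by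
  induction n with
  | zero => rfl
  | succ n ih => rw [haltPath_succ, ih, if_pos h]

lemma haltPath_cons_notMem {T : Set S} {s : S} (h : s ∉ T) (u : PathSpace S) :
    haltPath T (pcons s u) = pcons s (haltPath T u) := by
  funext n
  cases n with
  | zero => rfl
  | succ n =>
    rw [pcons_succ]
    induction n with
    | zero => rw [haltPath_succ, haltPath_zero, pcons_zero, if_neg h]; rfl
    | succ n ih => rw [haltPath_succ, ih, haltPath_succ]; rfl

lemma haltPath_never {T : Set S} {u : PathSpace S} (h : ∀ i, u i ∉ T) : haltPath T u = u := by
  funext n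
  induction n with
  | zero => rfl
  | succ n ih => rw [haltPath_succ, ih, if_neg (h n)]

lemma Wt_absorb (s : S) (l : List S) : ∀ (K : Proc S), (∀ l, K l s = PMF.pure s) →
    Wt K s l ≤ if ∀ x ∈ l, x = s then 1 else 0 := by
  induction l with
  | nil => intro K hK; simp [Wt]
  | cons x l ih =>
    intro K hK
    by_cases hx : x = s
    · subst hx
      simpa [Wt, hK] using ih (K.tail x) (fun l => hK _)
    · simp [Wt, hK, hx]

lemma couple_aux (T : Set S) (l : List S) : ∀ (K K' : Proc S) (s : S),
    (∀ l s, (∀ x ∈ l, x ∉ T) → s ∉ T → K l s = K' l s) →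
    (∀ l, ∀ s ∈ T, K l s = PMF.pure s) →
    Wt K s l ≤ (pm K' s).map (haltPath T) (cyl (s :: l)) := by
  induction l with
  | nil =>
    intro K K' s h1 h2
    rw [Measure.map_apply (measurable_haltPath T) (measurableSet_cyl _), pm_eq_sum,
      Measure.sum_apply _ (measurable_haltPath T (measurableSet_cyl _))]
    have : ∀ x, ((pm (K'.tail s) x).map (pcons s)) (haltPath T ⁻¹' cyl [s]) = 1 := by
      intro x
      rw [Measure.map_apply (measurable_pcons s) (measurable_haltPath T (measurableSet_cyl _))]
      have : pcons s ⁻¹' (haltPath T ⁻¹' cyl [s]) = Set.univ := by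
        ext u
        simp only [Set.mem_preimage, mem_cyl_cons, haltPath_zero, pcons_zero, true_and, Set.mem_univ,
          iff_true]
        exact mem_cyl_nil _
      rw [this]; simp
    simp [this, PMF.tsum_coe, Wt]
  | cons x l ih =>
    intro K K' s h1 h2
    by_cases hs : s ∈ T
    · refine (Wt_absorb s (x :: l) K (fun l => h2 l s hs)).trans ?_
      split_ifs with hall
      · rw [Measure.map_apply (measurable_haltPath T) (measurableSet_cyl _), pm_eq_sum,
          Measure.sum_apply _ (measurable_haltPath T (measurableSet_cyl _))]
        have : ∀ y, ((pm (K'.tail s) y).map (pcons s)) (haltPath T ⁻¹' cyl (s :: x :: l)) = 1 := by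
          intro y
          rw [Measure.map_apply (measurable_pcons s) (measurable_haltPath T (measurableSet_cyl _))]
          have : pcons s ⁻¹' (haltPath T ⁻¹' cyl (s :: x :: l)) = Set.univ := by
            rw [Set.eq_univ_iff_forall]
            intro u i
            rw [haltPath_cons_mem hs]
            have hm : (s :: x :: l).get i ∈ s :: x :: l := List.get_mem _ _
            rcases List.mem_cons.1 hm with h | h
            · exact h.symm
            · exact (hall _ h).symm
          rw [this]; simp
        simp [this, PMF.tsum_coe]
      · simp
    · rw [Measure.map_apply (measurable_haltPath T) (measurableSet_cyl _), pm_eq_sum,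
        Measure.sum_apply _ (measurable_haltPath T (measurableSet_cyl _))]
      refine le_trans ?_ (ENNReal.le_tsum x)
      simp only [Measure.smul_apply, smul_eq_mul, Wt]
      rw [h1 [] s (by simp) hs]
      gcongr
      refine (ih (K.tail s) (K'.tail s) x ?_ ?_).trans ?_
      · intro l t hl ht
        refine h1 (s :: l) t ?_ ht
        intro y hy
        rcases List.mem_cons.1 hy with h | h
        · rw [h]; exact hs
        · exact hl y h
      · intro l t ht; exact h2 _ t ht
      · rw [Measure.map_apply (measurable_haltPath T) (measurableSet_cyl _),
          Measure.map_apply (measurable_pcons s) (measurable_haltPath T (measurableSet_cyl _))]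
        apply measure_mono
        intro u hu
        rw [Set.mem_preimage, Set.mem_preimage, haltPath_cons_notMem hs, pcons_mem_cyl]
        exact ⟨rfl, hu⟩

lemma pm_couple (T : Set S) (K K' : Proc S) (s : S)
    (h1 : ∀ l s, (∀ x ∈ l, x ∉ T) → s ∉ T → K l s = K' l s)
    (h2 : ∀ l, ∀ s ∈ T, K l s = PMF.pure s) :
    pm K s = (pm K' s).map (haltPath T) := by
  have : IsProbabilityMeasure ((pm K' s).map (haltPath T)) :=
    Measure.isProbabilityMeasure_map (measurable_haltPath T).aemeasurable
  exact (pm_unique (fun l => couple_aux T l K K' s h1 h2)).symm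

def Proc.shift (K : Proc S) (l0 : List S) : Proc S := fun l => K (l0 ++ l)

def hitBy (T : Set S) (n : ℕ) : Set (PathSpace S) := {u | ∃ i ≤ n, u i ∈ T}

lemma measurableSet_hitBy (T : Set S) (n : ℕ) : MeasurableSet (hitBy T n) := by
  have : hitBy T n = ⋃ i, ⋃ (_ : i ≤ n), {u : PathSpace S | u i ∈ T} := by
    ext u; simp [hitBy]
  rw [this]
  exact MeasurableSet.iUnion fun i => MeasurableSet.iUnion fun _ => measurableSet_coord _ _

lemma hitBy_pcons_mem {T : Set S} {s : S} (hs : s ∈ T) (n : ℕ) (u : PathSpace S) :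
    pcons s u ∈ hitBy T n := ⟨0, Nat.zero_le _, hs⟩

lemma hitBy_pcons_succ {T : Set S} {s : S} (hs : s ∉ T) (n : ℕ) (u : PathSpace S) :
    pcons s u ∈ hitBy T (n+1) ↔ u ∈ hitBy T n := by
  constructor
  · rintro ⟨i, hi, h⟩
    cases i with
    | zero => exact absurd h hs
    | succ i => exact ⟨i, by omega, h⟩
  · rintro ⟨i, hi, h⟩
    exact ⟨i+1, by omega, h⟩

lemma hit_le (T : Set S) {φ ψ : PathSpace S → ENNReal} (hφ : Measurable φ) (hψ : Measurable ψ)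
    (h2 : ∀ s, s ∉ T → ∀ u, φ (pcons s u) ≤ φ u)
    (h3 : ∀ s, s ∉ T → ∀ u, ψ u ≤ ψ (pcons s u)) (n : ℕ) : ∀ (K : Proc S) (s : S),
    (∀ l0 : List S, (∀ x ∈ l0, x ∉ T) → ∀ t ∈ T,
      ∫⁻ u, φ u ∂(pm (K.shift l0) t) ≤ ∫⁻ u, ψ u ∂(pm (K.shift l0) t)) →
    ∫⁻ u, (hitBy T n).indicator φ u ∂(pm K s) ≤ ∫⁻ u, (hitBy T n).indicator ψ u ∂(pm K s) := by
  have key : ∀ n (K : Proc S) (s : S), s ∈ T →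
    (∀ l0 : List S, (∀ x ∈ l0, x ∉ T) → ∀ t ∈ T,
      ∫⁻ u, φ u ∂(pm (K.shift l0) t) ≤ ∫⁻ u, ψ u ∂(pm (K.shift l0) t)) →
    ∫⁻ u, (hitBy T n).indicator φ u ∂(pm K s) ≤ ∫⁻ u, (hitBy T n).indicator ψ u ∂(pm K s) := by
    intro n K s hs h
    have e : ∀ {f : PathSpace S → ENNReal}, Measurable f →
        ∫⁻ u, (hitBy T n).indicator f u ∂(pm K s) = ∫⁻ u, f u ∂(pm K s) := by
      intro f hf
      rw [lintegral_pm K s hf, lintegral_pm K s (hf.indicator (measurableSet_hitBy T n))]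
      simp_rw [Set.indicator_of_mem (hitBy_pcons_mem hs n _)]
    rw [e hφ, e hψ]
    exact h [] (by simp) s hs
  induction n with
  | zero =>
    intro K s h
    by_cases hs : s ∈ T
    · exact key 0 K s hs h
    · rw [lintegral_pm K s (hφ.indicator (measurableSet_hitBy T 0))]
      have : ∀ u, pcons s u ∉ hitBy T 0 := by
        rintro u ⟨i, hi, h⟩
        have : i = 0 := by omega
        subst this
        exact hs h
      simp [Set.indicator_of_notMem (this _)]
  | succ n ih =>
    intro K s h
    by_cases hs : s ∈ T
    · exact key (n+1) K s hs h
    · rw [lintegral_pm K s (hφ.indicator (measurableSet_hitBy T _)),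
        lintegral_pm K s (hψ.indicator (measurableSet_hitBy T _))]
      apply ENNReal.tsum_le_tsum
      intro x
      refine mul_le_mul_right ?_ _
      calc _ ≤ ∫⁻ u, (hitBy T n).indicator φ u ∂(pm (K.tail s) x) := by
            apply lintegral_mono
            intro u
            by_cases hu : u ∈ hitBy T n
            · simp only [Set.indicator_of_mem hu,
                Set.indicator_of_mem ((hitBy_pcons_succ hs n u).2 hu)]
              exact h2 s hs u
            · beta_reduce
              rw [Set.indicator_of_notMem (fun hh => hu ((hitBy_pcons_succ hs n u).1 hh))]
              exact zero_le
        _ ≤ ∫⁻ u, (hitBy T n).indicator ψ u ∂(pm (K.tail s) x) := by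
            apply ih
            intro l0 hl0 t ht
            refine h (s :: l0) ?_ t ht
            intro y hy
            rcases List.mem_cons.1 hy with h | h
            · rw [h]; exact hs
            · exact hl0 y h
        _ ≤ _ := by
            apply lintegral_mono
            intro u
            by_cases hu : u ∈ hitBy T n
            · simp only [Set.indicator_of_mem hu,
                Set.indicator_of_mem ((hitBy_pcons_succ hs n u).2 hu)]
              exact h3 s hs u
            · rw [Set.indicator_of_notMem hu]
              exact zero_le

lemma D_lemma (T : Set S) {φ ψ : PathSpace S → ENNReal} (hφ : Measurable φ) (hψ : Measurable ψ)
    (h1 : ∀ u : PathSpace S, (∀ i, u i ∉ T) → φ u ≤ ψ u)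
    (h2 : ∀ s, s ∉ T → ∀ u, φ (pcons s u) ≤ φ u)
    (h3 : ∀ s, s ∉ T → ∀ u, ψ u ≤ ψ (pcons s u)) (K : Proc S) (s : S)
    (h : ∀ l0 : List S, (∀ x ∈ l0, x ∉ T) → ∀ t ∈ T,
      ∫⁻ u, φ u ∂(pm (K.shift l0) t) ≤ ∫⁻ u, ψ u ∂(pm (K.shift l0) t)) :
    ∫⁻ u, φ u ∂(pm K s) ≤ ∫⁻ u, ψ u ∂(pm K s) := by
  have hmono : Monotone (hitBy T) := by
    rintro a b hab u ⟨i, hi, h⟩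
    exact ⟨i, hi.trans hab, h⟩
  have hH : MeasurableSet (⋃ n, hitBy T n) := MeasurableSet.iUnion (measurableSet_hitBy T)
  have e : ∀ {f : PathSpace S → ENNReal}, Measurable f →
      ∫⁻ u in ⋃ n, hitBy T n, f u ∂(pm K s) = ⨆ n, ∫⁻ u, (hitBy T n).indicator f u ∂(pm K s) := by
    intro f hf
    rw [← lintegral_indicator hH, ← lintegral_iSup]
    · congr 1
      funext u
      by_cases hu : u ∈ ⋃ n, hitBy T n
      · rw [Set.indicator_of_mem hu]
        apply le_antisymm
        · obtain ⟨n, hn⟩ := Set.mem_iUnion.1 hu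
          refine le_trans ?_ (le_iSup _ n)
          rw [Set.indicator_of_mem hn]
        · exact iSup_le fun n => Set.indicator_le_self _ _ _
      · rw [Set.indicator_of_notMem hu]
        symm
        simp only [ENNReal.iSup_eq_zero]
        intro n
        exact Set.indicator_of_notMem (fun h => hu (Set.mem_iUnion.2 ⟨n, h⟩)) _
    · exact fun n => hf.indicator (measurableSet_hitBy T n)
    · intro a b hab u
      exact Set.indicator_le_indicator_of_subset (hmono hab) (fun _ => zero_le) u
  rw [← lintegral_add_compl φ hH, ← lintegral_add_compl ψ hH, e hφ, e hψ]
  refine add_le_add (iSup_mono fun n => hit_le T hφ hψ h2 h3 n K s h) ?_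
  apply setLIntegral_mono hψ
  intro u hu
  apply h1
  intro i hi
  exact hu (Set.mem_iUnion.2 ⟨i, i, le_rfl, hi⟩)

end MuCaseHelpers3

section MuCaseHelpers4
open MeasureTheory ProbabilityTheory

def mkPMF (f : S → ENNReal) (h : HasSum f 1) : PMF S := ⟨f, h⟩

def kern (A : Arena S) (σ1 : Strategy A Player.one) (σ2 : Strategy A Player.two) : Proc S :=
  fun l s =>
    if A.E s = ∅ then PMF.pure s
    else match A.owner s with
      | Player.one => PMF.pure (σ1.next l s)
      | Player.two => PMF.pure (σ2.next l s)
      | Player.nature =>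
        if h : HasSum (fun t => ENNReal.ofReal (A.prob s t)) 1 then
          mkPMF _ h else PMF.pure s

lemma kern_term {A : Arena S} {σ1 : Strategy A Player.one} {σ2 : Strategy A Player.two}
    {l : List S} {s : S} (h : A.E s = ∅) : kern A σ1 σ2 l s = PMF.pure s := by
  simp [kern, h]

lemma kern_one {A : Arena S} {σ1 : Strategy A Player.one} {σ2 : Strategy A Player.two}
    {l : List S} {s : S} (h : A.E s ≠ ∅) (ho : A.owner s = Player.one) :
    kern A σ1 σ2 l s = PMF.pure (σ1.next l s) := by
  simp [kern, h, ho]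

lemma kern_two {A : Arena S} {σ1 : Strategy A Player.one} {σ2 : Strategy A Player.two}
    {l : List S} {s : S} (h : A.E s ≠ ∅) (ho : A.owner s = Player.two) :
    kern A σ1 σ2 l s = PMF.pure (σ2.next l s) := by
  simp [kern, h, ho]

lemma kern_nature {A : Arena S} (hA : A.Wellformed) {σ1 : Strategy A Player.one}
    {σ2 : Strategy A Player.two}
    {l : List S} {s : S} (ho : A.owner s = Player.nature) (t : S) :
    kern A σ1 σ2 l s t = ENNReal.ofReal (A.prob s t) := by
  obtain ⟨h0, h1, h2⟩ := hA s ho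
  have hE : A.E s ≠ ∅ := by
    intro h
    rw [h] at h2
    have h3 : A.prob s = 0 := Function.support_eq_empty_iff.1 h2.symm
    rw [h3] at h1
    have := h1.unique hasSum_zero
    norm_num at this
  have hs : HasSum (fun t => ENNReal.ofReal (A.prob s t)) 1 := by
    rw [← ENNReal.ofReal_one, ← h1.tsum_eq, ENNReal.ofReal_tsum_of_nonneg h0 h1.summable]
    exact ENNReal.summable.hasSum
  unfold kern
  rw [if_neg hE]
  simp only [ho]
  rw [dif_pos hs]
  rfl

lemma nature_nonterm {A : Arena S} (hA : A.Wellformed) {s : S} (ho : A.owner s = Player.nature) :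
    A.E s ≠ ∅ := by
  obtain ⟨h0, h1, h2⟩ := hA s ho
  intro h
  rw [h] at h2
  have h3 : A.prob s = 0 := Function.support_eq_empty_iff.1 h2.symm
  rw [h3] at h1
  have := h1.unique hasSum_zero
  norm_num at this

lemma snoc2_inj {l m : List S} {a b c d : S} (h : l ++ [a, b] = m ++ [c, d]) :
    l = m ∧ a = c ∧ b = d := by
  obtain ⟨h1, h2⟩ := List.append_inj' h rfl
  simp at h2
  exact ⟨h1, h2.1, h2.2⟩

lemma MC_inv {A : Arena S} {σ1 : Strategy A Player.one} {σ2 : Strategy A Player.two} {s0 : S}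
    {m : List S} {t x : S} (h : MC A σ1 σ2 s0 (m ++ [t, x])) :
    MC A σ1 σ2 s0 (m ++ [t]) ∧
      ((A.owner t = Player.one ∧ A.E t ≠ ∅ ∧ x = σ1.next m t) ∨
       (A.owner t = Player.two ∧ A.E t ≠ ∅ ∧ x = σ2.next m t) ∨
       (A.owner t = Player.nature ∧ x ∈ A.E t) ∨ (A.E t = ∅ ∧ x = t)) := by
  generalize hL : m ++ [t, x] = L at h
  cases h with
  | root =>
    have := congrArg List.length hL
    simp at this
  | one l s h ho hE =>
    obtain ⟨rfl, rfl, rfl⟩ := snoc2_inj hL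
    exact ⟨h, Or.inl ⟨ho, hE, rfl⟩⟩
  | two l s h ho hE =>
    obtain ⟨rfl, rfl, rfl⟩ := snoc2_inj hL
    exact ⟨h, Or.inr (Or.inl ⟨ho, hE, rfl⟩)⟩
  | nature l s y h ho hE =>
    obtain ⟨rfl, rfl, rfl⟩ := snoc2_inj hL
    exact ⟨h, Or.inr (Or.inr (Or.inl ⟨ho, hE⟩))⟩
  | term l s h hE =>
    obtain ⟨rfl, rfl, rfl⟩ := snoc2_inj hL
    exact ⟨h, Or.inr (Or.inr (Or.inr ⟨hE, rfl⟩))⟩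

lemma MC_head {A : Arena S} {σ1 : Strategy A Player.one} {σ2 : Strategy A Player.two} {s0 : S}
    {L : List S} (h : MC A σ1 σ2 s0 L) : L.head? = some s0 := by
  induction h with
  | root => rfl
  | one l s h ho hE ih => cases l <;> simpa using ih
  | two l s h ho hE ih => cases l <;> simpa using ih
  | nature l s y h ho hE ih => cases l <;> simpa using ih
  | term l s h hE ih => cases l <;> simpa using ih

lemma pathProb_snoc (A : Arena S) (t x : S) (m : List S) :
    pathProb A (m ++ [t, x]) = pathProb A (m ++ [t]) * stepProb A t x := by
  induction m with
  | nil => simp [pathProb]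
  | cons a m ih =>
    cases m with
    | nil => simp [pathProb]
    | cons b m =>
      simp only [List.cons_append, pathProb] at ih ⊢
      rw [ih, mul_assoc]

lemma stepProb_nonneg {A : Arena S} (hA : A.Wellformed) (s t : S) : 0 ≤ stepProb A s t := by
  unfold stepProb
  split_ifs with h
  · exact (hA s h).1 t
  · norm_num

lemma pathProb_nonneg {A : Arena S} (hA : A.Wellformed) : ∀ l, 0 ≤ pathProb A l
  | [] => by simp [pathProb]
  | [_] => by simp [pathProb]
  | s :: t :: l => by
    rw [pathProb]
    exact mul_nonneg (stepProb_nonneg hA s t) (pathProb_nonneg hA (t :: l))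

lemma cylWeight_snoc {A : Arena S} (hA : A.Wellformed) (σ1 : Strategy A Player.one)
    (σ2 : Strategy A Player.two) (s0 : S) (m : List S) (t x : S) :
    ENNReal.ofReal (cylWeight A σ1 σ2 s0 (m ++ [t, x])) =
      ENNReal.ofReal (cylWeight A σ1 σ2 s0 (m ++ [t])) * kern A σ1 σ2 m t x := by
  by_cases h : MC A σ1 σ2 s0 (m ++ [t])
  swap
  · have h' : ¬ MC A σ1 σ2 s0 (m ++ [t, x]) := fun hh => h (MC_inv hh).1
    simp [cylWeight, h, h']
  have e1 : cylWeight A σ1 σ2 s0 (m ++ [t]) = pathProb A (m ++ [t]) := if_pos h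
  rw [e1]
  by_cases hE : A.E t = ∅
  · have hn : A.owner t ≠ Player.nature := fun ho => nature_nonterm hA ho hE
    rw [kern_term hE]
    by_cases hx : x = t
    · subst hx
      rw [cylWeight, if_pos (MC.term m x h hE), pathProb_snoc]
      simp [stepProb, hn]
    · rw [cylWeight, if_neg]
      · simp [hx]
      · intro hh
        have := (MC_inv hh).2
        simp [hE, hx] at this
  cases ho : A.owner t with
  | one =>
    rw [kern_one hE ho]
    by_cases hx : x = σ1.next m t
    · subst hx
      rw [cylWeight, if_pos (MC.one m t h ho hE), pathProb_snoc]
      simp [stepProb, ho]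
    · rw [cylWeight, if_neg]
      · simp [hx]
      · intro hh
        have := (MC_inv hh).2
        simp [hE, hx, ho] at this
  | two =>
    rw [kern_two hE ho]
    by_cases hx : x = σ2.next m t
    · subst hx
      rw [cylWeight, if_pos (MC.two m t h ho hE), pathProb_snoc]
      simp [stepProb, ho]
    · rw [cylWeight, if_neg]
      · simp [hx]
      · intro hh
        have := (MC_inv hh).2
        simp [hE, hx, ho] at this
  | nature =>
    rw [kern_nature hA ho]
    by_cases hx : x ∈ A.E t
    · rw [cylWeight, if_pos (MC.nature m t x h ho hx), pathProb_snoc,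
        ENNReal.ofReal_mul (pathProb_nonneg hA _)]
      simp [stepProb, ho]
    · rw [cylWeight, if_neg]
      · have : A.prob t x = 0 := by
          rw [(hA t ho).2.2] at hx
          simpa using hx
        simp [this]
      · intro hh
        have := (MC_inv hh).2
        simp [hE, hx, ho] at this

lemma cylWeight_eq_Wt {A : Arena S} (hA : A.Wellformed) (σ1 : Strategy A Player.one)
    (σ2 : Strategy A Player.two) (s0 : S) (l : List S) :
    ENNReal.ofReal (cylWeight A σ1 σ2 s0 (s0 :: l)) = Wt (kern A σ1 σ2) s0 l := by
  induction l using List.reverseRecOn with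
  | nil => simp [cylWeight, MC.root, pathProb, Wt]
  | append_singleton l x ih =>
    obtain ⟨m, t, hm⟩ : ∃ m t, s0 :: l = m ++ [t] :=
      ⟨(s0 :: l).dropLast, (s0 :: l).getLast (by simp), (List.dropLast_append_getLast _).symm⟩
    rw [Wt_snoc x l _ s0 m t hm, ← ih, hm, ← cylWeight_snoc hA, ← List.cons_append, hm]
    simp

lemma pathMeasure_eq {A : Arena S} (hA : A.Wellformed) (σ1 : Strategy A Player.one)
    (σ2 : Strategy A Player.two) (s0 : S) :
    pathMeasure A σ1 σ2 s0 = pm (kern A σ1 σ2) s0 := by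
  have h : ∃ μ : Measure (PathSpace S), IsProbabilityMeasure μ ∧
      ∀ l : List S, l ≠ [] → μ (cyl l) = ENNReal.ofReal (cylWeight A σ1 σ2 s0 l) := by
    refine ⟨pm (kern A σ1 σ2) s0, inferInstance, ?_⟩
    intro l hl
    cases l with
    | nil => exact absurd rfl hl
    | cons s l =>
      by_cases hs : s = s0
      · subst hs
        rw [pm_cyl, cylWeight_eq_Wt hA]
      · have h1 : ¬ MC A σ1 σ2 s0 (s :: l) := by
          intro h
          have := MC_head h
          simp at this
          exact hs this
        rw [cylWeight, if_neg h1, ENNReal.ofReal_zero, pm_eq_sum,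
          Measure.sum_apply _ (measurableSet_cyl _), ENNReal.tsum_eq_zero]
        intro x
        rw [Measure.smul_apply, Measure.map_apply (measurable_pcons _) (measurableSet_cyl _)]
        have : pcons s0 ⁻¹' cyl (s :: l) = ∅ := by
          ext u; simp [pcons_mem_cyl, Ne.symm hs]
        simp [this]
  rw [pathMeasure, dif_pos h]
  have := h.choose_spec.1
  apply pm_unique
  intro l
  rw [h.choose_spec.2 _ (by simp), cylWeight_eq_Wt hA]

def Strategy.resid {A : Arena S} {pl : Player} (τ : Strategy A pl) (l0 : List S) :
    Strategy A pl where
  next l s := τ.next (l0 ++ l) s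
  valid l s := τ.valid (l0 ++ l) s

lemma kern_shift {A : Arena S} (σ1 : Strategy A Player.one)
    (σ2 : Strategy A Player.two) (l0 : List S) :
    (kern A σ1 σ2).shift l0 = kern A (σ1.resid l0) (σ2.resid l0) := rfl

lemma kern_tail {A : Arena S} (σ1 : Strategy A Player.one)
    (σ2 : Strategy A Player.two) (s : S) :
    (kern A σ1 σ2).tail s = kern A (σ1.resid [s]) (σ2.resid [s]) := rfl

instance {A : Arena S} {pl : Player} : Nonempty (Strategy A pl) :=
  ⟨{ next := fun _ s => if h : (A.E s).Nonempty then h.some else s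
     valid := fun _ s _ h => by
        have h' := Set.nonempty_iff_ne_empty.2 h
        simp only [h', dif_pos]
        exact h'.some_mem }⟩

/-! payoff -/

lemma payoff_first {A : Arena S} {pri : S → ℕ} {R : S → ℝ} {u : PathSpace S} {i : ℕ}
    (h : A.E (u i) = ∅) (h' : ∀ j < i, A.E (u j) ≠ ∅) : payoff A pri R u = R (u i) := by
  have hex : ∃ i, A.E (u i) = ∅ := ⟨i, h⟩
  have : Nat.find hex = i := (Nat.find_eq_iff hex).2 ⟨h, h'⟩
  rw [payoff, dif_pos hex, this]

lemma payoff_never {A : Arena S} {pri : S → ℕ} {R : S → ℝ} {u : PathSpace S}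
    (h : ∀ i, A.E (u i) ≠ ∅) : payoff A pri R u =
      if Even (sSup {n | {i | pri (u i) = n}.Infinite}) then 1 else 0 := by
  rw [payoff, dif_neg (by rintro ⟨i, hi⟩; exact h i hi)]

lemma first_exists {p : ℕ → Prop} (h : ∃ i, p i) : ∃ i, p i ∧ ∀ j < i, ¬ p j :=
  ⟨Nat.find h, Nat.find_spec h, fun _ hj => Nat.find_min h hj⟩

lemma inf_iff {pri : S → ℕ} {u : PathSpace S} {n : ℕ} :
    {i | pri (u i) = n}.Infinite ↔ ∀ k, ∃ i, k ≤ i ∧ pri (u i) = n := by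
  rw [← Nat.frequently_atTop_iff_infinite, Filter.frequently_atTop]

lemma payoff_nonneg {A : Arena S} {pri : S → ℕ} {R : S → ℝ} (hR : ∀ s, 0 ≤ R s ∧ R s ≤ 1)
    (u : PathSpace S) : 0 ≤ payoff A pri R u := by
  unfold payoff
  split_ifs
  · exact (hR _).1
  · norm_num
  · norm_num

lemma payoff_le_one {A : Arena S} {pri : S → ℕ} {R : S → ℝ} (hR : ∀ s, 0 ≤ R s ∧ R s ≤ 1)
    (u : PathSpace S) : payoff A pri R u ≤ 1 := by
  unfold payoff
  split_ifs
  · exact (hR _).2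
  · norm_num
  · norm_num

lemma payoff_cons {A : Arena S} {pri : S → ℕ} {R : S → ℝ} {s : S} (hs : A.E s ≠ ∅)
    (u : PathSpace S) : payoff A pri R (pcons s u) = payoff A pri R u := by
  by_cases h : ∃ i, A.E (u i) = ∅
  · obtain ⟨i, hi, hj⟩ := first_exists h
    rw [payoff_first hi hj, payoff_first (i := i+1) hi]
    · rfl
    · intro j hj'
      cases j with
      | zero => exact hs
      | succ j => exact hj j (by omega)
  · replace h : ∀ i, A.E (u i) ≠ ∅ := fun i hi => h ⟨i, hi⟩
    rw [payoff_never h, payoff_never]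
    · have : ∀ n, {i | pri (pcons s u i) = n}.Infinite ↔ {i | pri (u i) = n}.Infinite := by
        intro n
        rw [inf_iff, inf_iff]
        constructor
        · intro h k
          obtain ⟨i, hi, h⟩ := h (k+1)
          cases i with
          | zero => omega
          | succ i => exact ⟨i, by omega, h⟩
        · intro h k
          obtain ⟨i, hi, h⟩ := h k
          exact ⟨i+1, by omega, h⟩
      simp_rw [this]
    · intro i
      cases i with
      | zero => exact hs
      | succ i => exact h i

lemma payoff_cons_term {A : Arena S} {pri : S → ℕ} {R : S → ℝ} {s : S} (hs : A.E s = ∅)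
    (u : PathSpace S) : payoff A pri R (pcons s u) = R s :=
  payoff_first (i := 0) hs (by simp)

lemma sSup_eq_findGreatest {B : Set ℕ} {N : ℕ} (h : ∀ n ∈ B, n ≤ N) :
    sSup B = Nat.findGreatest (· ∈ B) N := by
  rcases B.eq_empty_or_nonempty with hE | hne
  · have h0 : sSup B = 0 := by rw [hE]; simp
    rw [h0]
    symm
    rw [Nat.findGreatest_eq_zero_iff]
    intro n _ _
    rw [hE]
    simp
  · apply le_antisymm
    · apply csSup_le hne
      intro b hb
      exact Nat.le_findGreatest (h b hb) hb
    · apply le_csSup ⟨N, h⟩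
      obtain ⟨b, hb⟩ := hne
      exact Nat.findGreatest_spec (P := (· ∈ B)) (h b hb) hb

lemma measurable_payoff {A : Arena S} {pri : S → ℕ} {R : S → ℝ} {N : ℕ} (hN : ∀ s, pri s ≤ N) :
    Measurable (payoff A pri R) := by
  have hinf : ∀ n, MeasurableSet {u : PathSpace S | {i | pri (u i) = n}.Infinite} := by
    intro n
    have : {u : PathSpace S | {i | pri (u i) = n}.Infinite} =
        ⋂ k, ⋃ i, ⋃ (_ : k ≤ i), {u : PathSpace S | u i ∈ {s | pri s = n}} := by
      ext u
      simp only [Set.mem_ofPred_eq, Set.mem_iInter, Set.mem_iUnion]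
      rw [inf_iff]
      simp
    rw [this]
    exact MeasurableSet.iInter fun k => MeasurableSet.iUnion fun i => MeasurableSet.iUnion
      fun _ => measurableSet_coord _ _
  have hsup : ∀ u : PathSpace S, sSup {n | {i | pri (u i) = n}.Infinite} =
      Nat.findGreatest (fun n => {i | pri (u i) = n}.Infinite) N := by
    intro u
    apply sSup_eq_findGreatest
    intro n hn
    obtain ⟨i, hi⟩ := Set.Infinite.nonempty hn
    rw [← (show pri (u i) = n from hi)]
    exact hN _
  have hev : MeasurableSet {u : PathSpace S | Even (sSup {n | {i | pri (u i) = n}.Infinite})} := by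
    simp_rw [hsup]
    have := measurable_findGreatest (α := PathSpace S)
      (p := fun u n => {i | pri (u i) = n}.Infinite) (N := N) (fun k _ => hinf k)
    exact this (t := {n | Even n}) trivial
  have hT : ∀ i, MeasurableSet {u : PathSpace S | u i ∈ {s | A.E s = ∅}} :=
    fun i => measurableSet_coord _ _
  intro B hB
  have : payoff A pri R ⁻¹' B =
      (⋃ i, ({u : PathSpace S | u i ∈ {s | A.E s = ∅}} ∩
        (⋂ j, ⋂ (_ : j < i), {u : PathSpace S | u j ∈ {s | A.E s = ∅}}ᶜ)) ∩
        {u : PathSpace S | u i ∈ R ⁻¹' B}) ∪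
      ((⋂ j, {u : PathSpace S | u j ∈ {s | A.E s = ∅}}ᶜ) ∩
       (({u : PathSpace S | Even (sSup {n | {i | pri (u i) = n}.Infinite})} ∩ {_u | (1:ℝ) ∈ B}) ∪
        ({u : PathSpace S | Even (sSup {n | {i | pri (u i) = n}.Infinite})}ᶜ ∩
          {_u | (0:ℝ) ∈ B}))) := by
    ext u
    by_cases h : ∃ i, A.E (u i) = ∅
    · obtain ⟨i, hi, hj⟩ := first_exists h
      rw [Set.mem_preimage, payoff_first hi hj]
      constructor
      · intro hB
        left
        refine Set.mem_iUnion.2 ⟨i, ⟨hi, ?_⟩, hB⟩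
        exact Set.mem_iInter.2 fun j => Set.mem_iInter.2 fun hji => hj j hji
      · rintro (hB | hB)
        · obtain ⟨i', ⟨h1, h2⟩, h3⟩ := Set.mem_iUnion.1 hB
          have h2' : ∀ j < i', A.E (u j) ≠ ∅ := fun j hj =>
            Set.mem_iInter.1 (Set.mem_iInter.1 h2 j) hj
          have : i = i' := by
            rcases lt_trichotomy i i' with hh | hh | hh
            · exact absurd hi (h2' i hh)
            · exact hh
            · exact absurd h1 (hj i' hh)
          subst this
          exact h3
        · exact absurd hi (Set.mem_iInter.1 hB.1 i)
    · replace h : ∀ i, A.E (u i) ≠ ∅ := fun i hi => h ⟨i, hi⟩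
      rw [Set.mem_preimage, payoff_never h]
      have hc : u ∉ (⋃ i, ({u : PathSpace S | u i ∈ {s | A.E s = ∅}} ∩
        (⋂ j, ⋂ (_ : j < i), {u : PathSpace S | u j ∈ {s | A.E s = ∅}}ᶜ)) ∩
        {u : PathSpace S | u i ∈ R ⁻¹' B}) := by
        intro hB
        obtain ⟨i', ⟨h1, h2⟩, h3⟩ := Set.mem_iUnion.1 hB
        exact h i' h1
      have hd : u ∈ (⋂ j, {u : PathSpace S | u j ∈ {s | A.E s = ∅}}ᶜ) :=
        Set.mem_iInter.2 fun j => h j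
      rw [Set.mem_union, Set.mem_inter_iff]
      simp only [hc, hd, false_or, true_and]
      by_cases he : Even (sSup {n | {i | pri (u i) = n}.Infinite}) <;> simp [he]
  rw [this]
  refine MeasurableSet.union (MeasurableSet.iUnion fun i => ?_) ?_
  · exact ((hT i).inter (MeasurableSet.iInter fun j => MeasurableSet.iInter fun _ =>
      (hT j).compl)).inter (measurableSet_coord _ _)
  · exact (MeasurableSet.iInter fun j => (hT j).compl).inter
      ((hev.inter (MeasurableSet.const _)).union (hev.compl.inter (MeasurableSet.const _)))

/-- expected payoff, extended nonnegative -/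
def EL (A : Arena S) (pri : S → ℕ) (R : S → ℝ) (K : Proc S) (s : S) : ENNReal :=
  ∫⁻ u, ENNReal.ofReal (payoff A pri R u) ∂(pm K s)

lemma EL_le_one {A : Arena S} {pri : S → ℕ} {R : S → ℝ} (hR : ∀ s, 0 ≤ R s ∧ R s ≤ 1)
    (K : Proc S) (s : S) : EL A pri R K s ≤ 1 := by
  unfold EL
  calc _ ≤ ∫⁻ u, 1 ∂(pm K s) := by
        apply lintegral_mono
        intro u
        simpa using payoff_le_one hR u
    _ = 1 := by simp

lemma expReward_eq {A : Arena S} (hA : A.Wellformed) {pri : S → ℕ} {R : S → ℝ} {N : ℕ}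
    (hN : ∀ s, pri s ≤ N)
    (hR : ∀ s, 0 ≤ R s ∧ R s ≤ 1) (σ1 : Strategy A Player.one)
    (σ2 : Strategy A Player.two) (s : S) :
    expReward A pri R σ1 σ2 s = (EL A pri R (kern A σ1 σ2) s).toReal := by
  unfold expReward EL
  rw [pathMeasure_eq hA, integral_eq_lintegral_of_nonneg_ae]
  · exact Filter.Eventually.of_forall (payoff_nonneg hR)
  · exact (measurable_payoff hN).aestronglyMeasurable

end MuCaseHelpers4

section MuCaseHelpers5
open MeasureTheory ProbabilityTheory

section vals
variable {I1 J : Type*} [Nonempty I1] [Nonempty J] {f : I1 → J → ℝ}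

lemma bddb (hf : ∀ i j, 0 ≤ f i j ∧ f i j ≤ 1) (i : I1) : BddBelow (Set.range (f i)) :=
  ⟨0, by rintro _ ⟨j, rfl⟩; exact (hf i j).1⟩

lemma bdda (hf : ∀ i j, 0 ≤ f i j ∧ f i j ≤ 1) (j : J) : BddAbove (Set.range fun i => f i j) :=
  ⟨1, by rintro _ ⟨i, rfl⟩; exact (hf i j).2⟩

lemma bdda_inf (hf : ∀ i j, 0 ≤ f i j ∧ f i j ≤ 1) :
    BddAbove (Set.range fun i => ⨅ j, f i j) :=
  ⟨1, by
    rintro _ ⟨i, rfl⟩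
    exact (ciInf_le (bddb hf i) (Classical.arbitrary J)).trans (hf i _).2⟩

lemma bddb_sup (hf : ∀ i j, 0 ≤ f i j ∧ f i j ≤ 1) :
    BddBelow (Set.range fun j => ⨆ i, f i j) :=
  ⟨0, by
    rintro _ ⟨j, rfl⟩
    exact (hf (Classical.arbitrary I1) j).1.trans (le_ciSup (bdda hf j) (Classical.arbitrary I1))⟩

lemma le_lower (hf : ∀ i j, 0 ≤ f i j ∧ f i j ≤ 1) {c : ℝ} (i : I1) (h : ∀ j, c ≤ f i j) :
    c ≤ ⨆ i, ⨅ j, f i j :=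
  (le_ciInf h).trans (le_ciSup (bdda_inf hf) i)

lemma lower_le (hf : ∀ i j, 0 ≤ f i j ∧ f i j ≤ 1) {c : ℝ} (h : ∀ i, ∃ j, f i j ≤ c) :
    ⨆ i, ⨅ j, f i j ≤ c :=
  ciSup_le fun i => by
    obtain ⟨j, hj⟩ := h i
    exact (ciInf_le (bddb hf i) j).trans hj

lemma upper_le (hf : ∀ i j, 0 ≤ f i j ∧ f i j ≤ 1) {c : ℝ} (j : J) (h : ∀ i, f i j ≤ c) :
    ⨅ j, ⨆ i, f i j ≤ c :=
  (ciInf_le (bddb_sup hf) j).trans (ciSup_le h)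

lemma lower_opt (hf : ∀ i j, 0 ≤ f i j ∧ f i j ≤ 1) {ε : ℝ} (hε : 0 < ε) :
    ∃ i, ∀ j, (⨆ i, ⨅ j, f i j) - ε ≤ f i j := by
  obtain ⟨i, hi⟩ := exists_lt_of_lt_ciSup (sub_lt_self (⨆ i, ⨅ j, f i j) hε)
  exact ⟨i, fun j => hi.le.trans (ciInf_le (bddb hf i) j)⟩

lemma upper_opt (hf : ∀ i j, 0 ≤ f i j ∧ f i j ≤ 1) {ε : ℝ} (hε : 0 < ε) :
    ∃ j, ∀ i, f i j ≤ (⨅ j, ⨆ i, f i j) + ε := by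
  obtain ⟨j, hj⟩ := exists_lt_of_ciInf_lt (lt_add_of_pos_right (⨅ j, ⨆ i, f i j) hε)
  exact ⟨j, fun i => (le_ciSup (bdda hf j) i).trans hj.le⟩

lemma lower_le_upper (hf : ∀ i j, 0 ≤ f i j ∧ f i j ≤ 1) :
    ⨆ i, ⨅ j, f i j ≤ ⨅ j, ⨆ i, f i j :=
  ciSup_le fun i => le_ciInf fun j => (ciInf_le (bddb hf i) j).trans (le_ciSup (bdda hf j) i)

lemma lower_mem (hf : ∀ i j, 0 ≤ f i j ∧ f i j ≤ 1) :
    0 ≤ (⨆ i, ⨅ j, f i j) ∧ (⨆ i, ⨅ j, f i j) ≤ 1 :=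
  ⟨le_lower hf (Classical.arbitrary I1) fun j => (hf _ j).1,
    lower_le hf fun i => ⟨Classical.arbitrary J, (hf i _).2⟩⟩

end vals

/-- merging strategies depending on the starting state -/
def unif {A : Arena S} {pl : Player} (τ : S → Strategy A pl) : Strategy A pl where
  next l s := (τ (l.headD s)).next l s
  valid l s := (τ (l.headD s)).valid l s

lemma pm_unif_one {A : Arena S} (τ : S → Strategy A Player.one) (σ2 : Strategy A Player.two)
    (s : S) : pm (kern A (unif τ) σ2) s = pm (kern A (τ s) σ2) s := by
  apply pm_congr <;> rfl

lemma pm_unif_two {A : Arena S} (τ : S → Strategy A Player.two) (σ1 : Strategy A Player.one)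
    (s : S) : pm (kern A σ1 (unif τ)) s = pm (kern A σ1 (τ s)) s := by
  apply pm_congr <;> rfl

/-- prepending a dummy step -/
def prep {A : Arena S} {pl : Player} (τ : Strategy A pl) : Strategy A pl where
  next l s := τ.next l.tail s
  valid l s := τ.valid l.tail s

/-- good data for a game -/
structure Good (A : Arena S) (pri : S → ℕ) (R : S → ℝ) (N : ℕ) : Prop where
  wf : A.Wellformed
  hN : ∀ s, pri s ≤ N
  hR : ∀ s, 0 ≤ R s ∧ R s ≤ 1

variable {A : Arena S} {pri : S → ℕ} {R : S → ℝ} {N : ℕ}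

lemma Good.exp (h : Good A pri R N) (σ1 : Strategy A Player.one)
    (σ2 : Strategy A Player.two) (s : S) :
    expReward A pri R σ1 σ2 s = (EL A pri R (kern A σ1 σ2) s).toReal :=
  expReward_eq h.wf h.hN h.hR σ1 σ2 s

lemma Good.mem (h : Good A pri R N) (s : S) (σ1 : Strategy A Player.one)
    (σ2 : Strategy A Player.two) :
    0 ≤ expReward A pri R σ1 σ2 s ∧ expReward A pri R σ1 σ2 s ≤ 1 := by
  rw [h.exp]
  refine ⟨ENNReal.toReal_nonneg, ?_⟩
  exact ENNReal.toReal_mono ENNReal.one_ne_top (EL_le_one h.hR _ _)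

lemma Good.EL_eq (h : Good A pri R N) (σ1 : Strategy A Player.one)
    (σ2 : Strategy A Player.two) (s : S) :
    EL A pri R (kern A σ1 σ2) s = ENNReal.ofReal (expReward A pri R σ1 σ2 s) := by
  rw [h.exp, ENNReal.ofReal_toReal]
  exact ne_top_of_le_ne_top ENNReal.one_ne_top (EL_le_one h.hR _ _)

lemma Good.unif_lower (h : Good A pri R N) {ε : ℝ} (hε : 0 < ε) :
    ∃ σ1 : Strategy A Player.one, ∀ s σ2,
      lowerValue A pri R s - ε ≤ expReward A pri R σ1 σ2 s := by
  have := fun s => lower_opt (h.mem s) hε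
  choose τ hτ using this
  refine ⟨unif τ, fun s σ2 => ?_⟩
  have e : expReward A pri R (unif τ) σ2 s = expReward A pri R (τ s) σ2 s := by
    rw [h.exp, h.exp, EL, EL, pm_unif_one]
  rw [e]
  exact hτ s σ2

lemma Good.unif_upper (h : Good A pri R N) {ε : ℝ} (hε : 0 < ε) :
    ∃ σ2 : Strategy A Player.two, ∀ s σ1,
      expReward A pri R σ1 σ2 s ≤ upperValue A pri R s + ε := by
  have := fun s => upper_opt (h.mem s) hε
  choose τ hτ using this
  refine ⟨unif τ, fun s σ1 => ?_⟩
  have e : expReward A pri R σ1 (unif τ) s = expReward A pri R σ1 (τ s) s := by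
    rw [h.exp, h.exp, EL, EL, pm_unif_two]
  rw [e]
  exact hτ s σ1

lemma Good.measΦ (h : Good A pri R N) :
    Measurable (fun u : PathSpace S => ENNReal.ofReal (payoff A pri R u)) :=
  (measurable_payoff h.hN).ennreal_ofReal

lemma Good.step (h : Good A pri R N) {s q : S} (ho : A.owner s = Player.one) (hE : A.E s = {q})
    (σ1 : Strategy A Player.one) (σ2 : Strategy A Player.two) :
    expReward A pri R σ1 σ2 s = expReward A pri R (σ1.resid [s]) (σ2.resid [s]) q := by
  have hne : A.E s ≠ ∅ := by rw [hE]; simp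
  have hq : σ1.next [] s = q := by
    have := σ1.valid [] s ho hne
    rw [hE] at this
    exact this
  rw [h.exp, h.exp, EL, EL, lintegral_pm_pure _ s q (by rw [kern_one hne ho, hq]) h.measΦ]
  simp_rw [payoff_cons hne]
  rfl

lemma Good.start_lower (h : Good A pri R N) {s q : S} (ho : A.owner s = Player.one)
    (hE : A.E s = {q}) : lowerValue A pri R q ≤ lowerValue A pri R s := by
  apply le_of_forall_pos_sub_le
  intro ε hε
  obtain ⟨σ1, h1⟩ := lower_opt (h.mem q) hε
  refine le_lower (h.mem s) (prep σ1) fun σ2 => ?_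
  rw [h.step ho hE]
  exact h1 (σ2.resid [s])

lemma Good.start_upper (h : Good A pri R N) {s q : S} (ho : A.owner s = Player.one)
    (hE : A.E s = {q}) : upperValue A pri R s ≤ upperValue A pri R q := by
  apply le_of_forall_pos_le_add
  intro ε hε
  obtain ⟨σ2, h1⟩ := upper_opt (h.mem q) hε
  refine upper_le (h.mem s) (prep σ2) fun σ1 => ?_
  rw [h.step ho hE]
  exact h1 (σ1.resid [s])

end MuCaseHelpers5

section MuCaseHelpers6
open MeasureTheory ProbabilityTheory

structure Setup (A A' : Arena S) (pri pri' : S → ℕ) (T : Set S) (h : S → S) (N : ℕ) : Prop where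
  own : ∀ s, A'.owner s = A.owner s
  prob : ∀ s, A'.prob s = A.prob s
  E_off : ∀ s, s ∉ T → A'.E s = A.E s
  E_on : ∀ t ∈ T, A.E t = ∅
  E_on' : ∀ t ∈ T, A'.E t = {h t}
  own_T : ∀ t ∈ T, A.owner t = Player.one
  pri_off : ∀ s, s ∉ T → pri' s = pri s
  pri_on : ∀ t ∈ T, pri' t = N
  odd : ¬ Even N

def termSet (A : Arena S) : Set S := {s | A.E s = ∅}

def Rof (T : Set S) (h : S → S) (R f : S → ℝ) : S → ℝ := fun s => if s ∈ T then f (h s) else R s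

variable {A A' : Arena S} {pri pri' : S → ℕ} {T : Set S} {h : S → S} {N : ℕ}

lemma Setup.notT (H : Setup A A' pri pri' T h N) {s : S} (hs : A.E s ≠ ∅) : s ∉ T :=
  fun ht => hs (H.E_on s ht)

lemma Setup.E' (H : Setup A A' pri pri' T h N) {s : S} (hs : A.E s ≠ ∅) : A'.E s ≠ ∅ := by
  rw [H.E_off s (H.notT hs)]; exact hs

lemma Setup.ET (H : Setup A A' pri pri' T h N) {s : S} (hs : s ∈ T) : A'.E s ≠ ∅ := by
  rw [H.E_on' s hs]; simp

/-- restriction of a strategy -/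
def Setup.restr (H : Setup A A' pri pri' T h N) {pl : Player} (τ : Strategy A' pl) :
    Strategy A pl where
  next := τ.next
  valid l s ho hE := by
    rw [← H.E_off s (H.notT hE)]
    exact τ.valid l s (by rw [H.own, ho]) (H.E' hE)

lemma Setup.couple (H : Setup A A' pri pri' T h N) (σ1 : Strategy A Player.one)
    (σ2 : Strategy A Player.two) (σ1' : Strategy A' Player.one) (σ2' : Strategy A' Player.two)
    (h1 : ∀ l s, (∀ x ∈ l, x ∉ termSet A) → s ∉ termSet A → σ1.next l s = σ1'.next l s)
    (h2 : ∀ l s, (∀ x ∈ l, x ∉ termSet A) → s ∉ termSet A → σ2.next l s = σ2'.next l s) (s : S) :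
    pm (kern A σ1 σ2) s = (pm (kern A' σ1' σ2') s).map (haltPath (termSet A)) := by
  apply pm_couple
  · intro l s hl hs
    have hE : A.E s ≠ ∅ := hs
    unfold kern
    rw [if_neg hE, if_neg (H.E' hE), H.own, h1 l s hl hs, h2 l s hl hs, H.prob]
  · intro l s hs
    exact kern_term hs

/-- halted payoff -/
def haltPay (A : Arena S) (pri : S → ℕ) (R : S → ℝ) (u : PathSpace S) : ENNReal :=
  ENNReal.ofReal (payoff A pri R (haltPath (termSet A) u))

lemma haltPay_term {R : S → ℝ} {s : S} (hs : s ∈ termSet A) (u : PathSpace S) :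
    haltPay A pri R (pcons s u) = ENNReal.ofReal (R s) := by
  unfold haltPay
  rw [payoff_first (i := 0)]
  · rw [haltPath_cons_mem hs]
  · rw [haltPath_cons_mem hs]; exact hs
  · simp

lemma haltPay_cons {R : S → ℝ} {s : S} (hs : s ∉ termSet A) (u : PathSpace S) :
    haltPay A pri R (pcons s u) = haltPay A pri R u := by
  unfold haltPay
  rw [haltPath_cons_notMem hs, payoff_cons hs]

lemma Setup.haltPay_never (H : Setup A A' pri pri' T h N) {R R' : S → ℝ} {u : PathSpace S}
    (hu : ∀ i, u i ∉ termSet A) :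
    haltPay A pri R u = ENNReal.ofReal (payoff A' pri' R' u) := by
  unfold haltPay
  rw [haltPath_never hu, payoff_never hu, payoff_never (A := A') (fun i => H.E' (hu i))]
  simp_rw [fun i => H.pri_off (u i) (H.notT (hu i))]

lemma Good.halt_meas {R : S → ℝ} {N0 : ℕ} (g : Good A pri R N0) : Measurable (haltPay A pri R) :=
  g.measΦ.comp (measurable_haltPath _)

lemma Setup.EL_couple (H : Setup A A' pri pri' T h N) {R : S → ℝ} {N0 : ℕ}
    (g : Good A pri R N0) (σ1 : Strategy A Player.one)
    (σ2 : Strategy A Player.two) (σ1' : Strategy A' Player.one) (σ2' : Strategy A' Player.two)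
    (h1 : ∀ l s, (∀ x ∈ l, x ∉ termSet A) → s ∉ termSet A → σ1.next l s = σ1'.next l s)
    (h2 : ∀ l s, (∀ x ∈ l, x ∉ termSet A) → s ∉ termSet A → σ2.next l s = σ2'.next l s) (s : S) :
    ∫⁻ u, haltPay A pri R u ∂(pm (kern A' σ1' σ2') s) =
      ENNReal.ofReal (expReward A pri R σ1 σ2 s) := by
  rw [← g.EL_eq, EL, H.couple σ1 σ2 σ1' σ2' h1 h2, lintegral_map g.measΦ (measurable_haltPath _)]
  rfl

/-! Lower bound -/

def after (TT : Set S) (l : List S) : List S := (l.dropWhile (fun x => decide (x ∉ TT))).tail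

lemma after_eq {TT : Set S} {l0 : List S} (hl : ∀ x ∈ l0, x ∉ TT) {t : S} (ht : t ∈ TT)
    (l : List S) : after TT (l0 ++ t :: l) = l := by
  unfold after
  induction l0 with
  | nil => simp [ht]
  | cons a l0 ih =>
    have ha : a ∉ TT := hl a (by simp)
    rw [List.cons_append, List.dropWhile_cons_of_pos (by simpa using ha)]
    exact ih fun x hx => hl x (by simp [hx])

def Setup.glue (H : Setup A A' pri pri' T h N) (τ : Strategy A Player.one)
    (τ' : Strategy A' Player.one) : Strategy A' Player.one where
  next l s := if ∀ x ∈ l, x ∉ termSet A then (if s ∈ T then h s else τ.next l s)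
    else τ'.next (after (termSet A) l) s
  valid l s ho hE := by
    split_ifs with h1 h2
    · rw [H.E_on' s h2]; rfl
    · rw [H.E_off s h2]
      rw [H.E_off s h2] at hE
      exact τ.valid l s (by rw [← H.own, ho]) hE
    · exact τ'.valid _ s ho hE

lemma Setup.lower_key (H : Setup A A' pri pri' T h N) {R f : S → ℝ} {N0 : ℕ}
    (g : Good A pri (Rof T h R f) N0) (g' : Good A' pri' R N) {ε : ℝ} (hε : 0 < ε)
    (τ : Strategy A Player.one) (τ' : Strategy A' Player.one)
    (hτ' : ∀ s σ2, f s - ε ≤ expReward A' pri' R τ' σ2 s) (σ2 : Strategy A' Player.two) (s : S) :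
    expReward A pri (Rof T h R f) τ (H.restr σ2) s ≤
      expReward A' pri' R (H.glue τ τ') σ2 s + ε := by
  have e0 := (g'.mem s (H.glue τ τ') σ2).1
  rw [← ENNReal.ofReal_le_ofReal_iff (by linarith), ENNReal.ofReal_add e0 hε.le, ← g'.EL_eq, EL,
    ← H.EL_couple g τ (H.restr σ2) (H.glue τ τ') σ2]
  rotate_left
  · intro l s hl hs
    have : s ∉ T := H.notT hs
    simp only [Setup.glue]
    rw [if_pos hl, if_neg this]
  · intro l s hl hs
    rfl
  have e1 : ∀ (K : Proc S) s, ∫⁻ u, (ENNReal.ofReal (payoff A' pri' R u) + ENNReal.ofReal ε) ∂(pm K s)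
      = ∫⁻ u, (ENNReal.ofReal (payoff A' pri' R u)) ∂(pm K s) + ENNReal.ofReal ε := by
    intro K s
    rw [lintegral_add_right _ measurable_const]
    simp
  rw [← e1]
  refine D_lemma (termSet A) (ψ := fun u => ENNReal.ofReal (payoff A' pri' R u) + ENNReal.ofReal ε)
    g.halt_meas (g'.measΦ.add measurable_const) ?_ ?_ ?_ _ s ?_
  · intro u hu
    rw [H.haltPay_never (R' := R) hu]
    exact le_self_add
  · intro s hs u
    rw [haltPay_cons hs]
  · intro s hs u
    rw [payoff_cons (H.E' hs)]
  · intro l0 hl0 t ht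
    rw [lintegral_pm_const _ t g.halt_meas _ (haltPay_term ht), e1]
    by_cases htT : t ∈ T
    · rw [kern_shift]
      have hE := H.ET htT
      rw [lintegral_pm_pure _ t (h t) _ g'.measΦ]
      · simp_rw [payoff_cons hE]
        have e2 : (kern A' ((H.glue τ τ').resid l0) (σ2.resid l0)).tail t =
            kern A' τ' (σ2.resid (l0 ++ [t])) := by
          have a1 : ((H.glue τ τ').resid l0).resid [t] = τ' := by
            cases hh : τ' with
            | mk nx vl =>
            simp only [Strategy.resid, Setup.glue, Strategy.mk.injEq]
            funext l s
            rw [if_neg]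
            · rw [List.singleton_append, after_eq hl0 ht]
            · push Not
              exact ⟨t, by simp, ht⟩
          have a2 : (σ2.resid l0).resid [t] = σ2.resid (l0 ++ [t]) := by
            simp [Strategy.resid]
          rw [kern_tail, a1, a2]
        rw [e2]
        change _ ≤ EL A' pri' R (kern A' τ' (σ2.resid (l0 ++ [t]))) (h t) + _
        rw [g'.EL_eq, ← ENNReal.ofReal_add (g'.mem _ _ _).1 hε.le]
        apply ENNReal.ofReal_le_ofReal
        have := hτ' (h t) (σ2.resid (l0 ++ [t]))
        simp only [Rof, htT, if_true]
        linarith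
      · rw [kern_one hE (by rw [H.own, H.own_T t htT])]
        simp only [Strategy.resid, Setup.glue, List.append_nil]
        rw [if_pos hl0, if_pos htT]
    · have hE' : A'.E t = ∅ := by rw [H.E_off t htT]; exact ht
      rw [lintegral_pm_const _ t g'.measΦ (ENNReal.ofReal (R t))]
      · simp only [Rof, htT, if_false]
        exact le_self_add
      · intro u
        rw [payoff_cons_term hE']

lemma Setup.lower (H : Setup A A' pri pri' T h N) {R : S → ℝ} {N0 : ℕ}
    (g : Good A pri (Rof T h R (lowerValue A' pri' R)) N0) (g' : Good A' pri' R N) (s : S) :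
    lowerValue A pri (Rof T h R (lowerValue A' pri' R)) s ≤ lowerValue A' pri' R s := by
  apply le_of_forall_pos_le_add
  intro ε hε
  obtain ⟨τ', hτ'⟩ := g'.unif_lower (half_pos hε)
  apply lower_le (g.mem s)
  intro τ
  by_contra hc
  push Not at hc
  have h1 : lowerValue A' pri' R s + ε / 2 ≤ lowerValue A' pri' R s := by
    refine le_lower (g'.mem s) (H.glue τ τ') fun σ2 => ?_
    have h1 := hc (H.restr σ2)
    have h2 := H.lower_key g g' (half_pos hε) τ τ' hτ' σ2 s
    linarith
  linarith

/-! Upper bound -/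

def nx {pl : Player} (TT : Set S) (τ : ℕ → Strategy A pl) : ℕ → List S → List S → S → S
  | k, acc, [], s => (τ k).next acc s
  | k, acc, x :: l, s => if x ∈ TT then nx TT τ (k+1) [] l s else nx TT τ k (acc ++ [x]) l s

lemma nx_no {pl : Player} {TT : Set S} {τ : ℕ → Strategy A pl} (k : ℕ) (l : List S) (s : S)
    (hl : ∀ x ∈ l, x ∉ TT) : ∀ acc, nx TT τ k acc l s = (τ k).next (acc ++ l) s := by
  induction l with
  | nil => intro acc; simp [nx]
  | cons a l ih =>
    intro acc
    rw [nx, if_neg (hl a (by simp)), ih fun x hx => hl x (by simp [hx])]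
    simp

lemma nx_hit {pl : Player} {TT : Set S} {τ : ℕ → Strategy A pl} (k : ℕ) (l0 : List S) (t : S)
    (l : List S) (s : S) (hl : ∀ x ∈ l0, x ∉ TT) (ht : t ∈ TT) :
    ∀ acc, nx TT τ k acc (l0 ++ t :: l) s = nx TT τ (k+1) [] l s := by
  induction l0 with
  | nil => intro acc; simp [nx, ht]
  | cons a l0 ih =>
    intro acc
    rw [List.cons_append, nx, if_neg (hl a (by simp)), ih fun x hx => hl x (by simp [hx])]

lemma nx_valid {pl : Player} {TT : Set S} {τ : ℕ → Strategy A pl} (l : List S) (s : S)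
    (ho : A.owner s = pl) (hE : A.E s ≠ ∅) : ∀ k acc, nx TT τ k acc l s ∈ A.E s := by
  induction l with
  | nil => intro k acc; exact (τ k).valid acc s ho hE
  | cons a l ih =>
    intro k acc
    rw [nx]
    split_ifs
    · exact ih _ _
    · exact ih _ _

def Setup.str (H : Setup A A' pri pri' T h N) (τ : ℕ → Strategy A Player.two) (k : ℕ) :
    Strategy A' Player.two where
  next l s := nx (termSet A) τ k [] l s
  valid l s ho hE := by
    have hs : s ∉ T := by
      intro hs
      have := H.own_T s hs
      rw [← H.own, ho] at this
      exact absurd this (by simp)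
    rw [H.E_off s hs] at hE ⊢
    exact nx_valid l s (by rw [← H.own, ho]) hE _ _

def fewT (A' : Arena S) (T : Set S) (n : ℕ) : Set (PathSpace S) :=
  {u | ∀ i, n ≤ i → u i ∈ T → ∃ j, j < i ∧ A'.E (u j) = ∅}

lemma measurableSet_fewT (A' : Arena S) (T : Set S) (n : ℕ) : MeasurableSet (fewT A' T n) := by
  have : fewT A' T n = ⋂ i, ⋂ (_ : n ≤ i), ({u : PathSpace S | u i ∈ T}ᶜ ∪
      ⋃ j, ⋃ (_ : j < i), {u : PathSpace S | u j ∈ termSet A'}) := by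
    ext u
    simp only [fewT, Set.mem_ofPred_eq, Set.mem_iInter, Set.mem_union, Set.mem_compl_iff,
      Set.mem_iUnion, imp_iff_not_or, termSet, exists_prop]
  rw [this]
  exact MeasurableSet.iInter fun i => MeasurableSet.iInter fun _ =>
    (measurableSet_coord _ _).compl.union (MeasurableSet.iUnion fun j => MeasurableSet.iUnion
      fun _ => measurableSet_coord _ _)

lemma fewT_mono (A' : Arena S) (T : Set S) : Monotone (fewT A' T) := by
  intro a b hab u hu i hi
  exact hu i (hab.trans hi)

lemma fewT_cons {s : S} (hs : A'.E s ≠ ∅) {n m : ℕ} {u : PathSpace S} (hnm : n ≤ m + 1)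
    (hu : pcons s u ∈ fewT A' T n) : u ∈ fewT A' T m := by
  intro i hi hT
  obtain ⟨j, hj, hjE⟩ := hu (i+1) (by omega) hT
  cases j with
  | zero => exact absurd hjE hs
  | succ j => exact ⟨j, by omega, hjE⟩

/-- truncated payoff -/
def few (A' : Arena S) (pri' : S → ℕ) (R : S → ℝ) (T : Set S) (n : ℕ) : PathSpace S → ENNReal :=
  (fewT A' T n).indicator fun u => ENNReal.ofReal (payoff A' pri' R u)

lemma few_le {R : S → ℝ} (n : ℕ) (u : PathSpace S) :
    few A' pri' R T n u ≤ ENNReal.ofReal (payoff A' pri' R u) := Set.indicator_le_self _ _ _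

lemma few_cons {R : S → ℝ} {s : S} (hs : A'.E s ≠ ∅) {n m : ℕ} {u : PathSpace S}
    (hnm : n ≤ m + 1) : few A' pri' R T n (pcons s u) ≤ few A' pri' R T m u := by
  by_cases hu : pcons s u ∈ fewT A' T n
  · rw [few, few, Set.indicator_of_mem hu, Set.indicator_of_mem (fewT_cons hs hnm hu),
      payoff_cons hs]
  · rw [few, Set.indicator_of_notMem hu]
    exact zero_le

lemma Setup.le_few (H : Setup A A' pri pri' T h N) {R : S → ℝ} (g' : Good A' pri' R N)
    (u : PathSpace S) :
    ENNReal.ofReal (payoff A' pri' R u) ≤ ⨆ n, few A' pri' R T n u := by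
  by_cases hex : ∃ n, u ∈ fewT A' T n
  · obtain ⟨n, hn⟩ := hex
    refine le_trans ?_ (le_iSup _ n)
    rw [few, Set.indicator_of_mem hn]
  · have hex' : ∀ n, ∃ i, n ≤ i ∧ u i ∈ T ∧ ∀ j < i, A'.E (u j) ≠ ∅ := by
      intro n
      by_contra hc
      apply hex
      refine ⟨n, fun i hi hT => ?_⟩
      by_contra hc2
      exact hc ⟨i, hi, hT, fun j hj hE => hc2 ⟨j, hj, hE⟩⟩
    have hne : ∀ j, A'.E (u j) ≠ ∅ := by
      intro j
      obtain ⟨i, hi, _, h2⟩ := hex' (j+1)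
      exact h2 j (by omega)
    have hs : sSup {n | {i | pri' (u i) = n}.Infinite} = N := by
      apply le_antisymm
      · have hb : ∀ n ∈ {n | {i | pri' (u i) = n}.Infinite}, n ≤ N := by
          intro n hn
          obtain ⟨i, hi⟩ := Set.Infinite.nonempty hn
          rw [← (show pri' (u i) = n from hi)]
          exact g'.hN _
        apply csSup_le' hb
      · apply le_csSup
        · refine ⟨N, ?_⟩
          intro n hn
          obtain ⟨i, hi⟩ := Set.Infinite.nonempty hn
          rw [← (show pri' (u i) = n from hi)]
          exact g'.hN _
        · rw [Set.mem_ofPred_eq, inf_iff]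
          intro k
          obtain ⟨i, hi, h1, _⟩ := hex' k
          exact ⟨i, hi, H.pri_on _ h1⟩
    rw [payoff_never hne, hs, if_neg H.odd]
    simp

lemma Good.few_meas {R : S → ℝ} (g' : Good A' pri' R N) (T : Set S) (n : ℕ) :
    Measurable (few A' pri' R T n) := g'.measΦ.indicator (measurableSet_fewT _ _ _)

lemma Setup.upper_key (H : Setup A A' pri pri' T h N) {R f : S → ℝ} {N0 : ℕ}
    (hf : ∀ s, 0 ≤ f s)
    (g : Good A pri (Rof T h R f) N0) (g' : Good A' pri' R N) {ε : ℝ} (hε : 0 < ε)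
    (Q : Set S) (hQ : ∀ t ∈ T, h t ∈ Q)
    (τ : ℕ → Strategy A Player.two)
    (hτ : ∀ k, ∀ s ∈ Q, ∀ σ1, expReward A pri (Rof T h R f) σ1 (τ k) s ≤ f s + ε / 2 ^ (k + 1))
    (n : ℕ) : ∀ (k : ℕ) (σ1 : Strategy A' Player.one), ∀ s ∈ Q,
    ∫⁻ u, few A' pri' R T n u ∂(pm (kern A' σ1 (H.str τ k)) s) ≤
      ENNReal.ofReal (f s + ε / 2 ^ k) := by
  induction n using Nat.strong_induction_on with
  | _ n ih' =>
  intro k σ1 s hs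
  have hδ : ∀ k : ℕ, 0 ≤ ε / 2 ^ k := fun k => by positivity
  have e1 : ∀ (K : Proc S) s, ∫⁻ u, (haltPay A pri (Rof T h R f) u +
      ENNReal.ofReal (ε / 2 ^ (k+1))) ∂(pm K s)
      = ∫⁻ u, haltPay A pri (Rof T h R f) u ∂(pm K s) + ENNReal.ofReal (ε / 2 ^ (k+1)) := by
    intro K s
    rw [lintegral_add_right _ measurable_const]
    simp
  calc _ ≤ ∫⁻ u, (haltPay A pri (Rof T h R f) u +
      ENNReal.ofReal (ε / 2 ^ (k+1))) ∂(pm (kern A' σ1 (H.str τ k)) s) := by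
        refine D_lemma (termSet A) (ψ := fun u => haltPay A pri (Rof T h R f) u +
            ENNReal.ofReal (ε / 2 ^ (k+1))) (g'.few_meas T n) (g.halt_meas.add measurable_const)
          ?_ ?_ ?_ _ s ?_
        · intro u hu
          rw [H.haltPay_never (R' := R) hu]
          exact (few_le n u).trans le_self_add
        · intro s hs u
          exact few_cons (H.E' hs) (by omega)
        · intro s hs u
          rw [haltPay_cons hs]
        · intro l0 hl0 t ht
          rw [e1, lintegral_pm_const _ t g.halt_meas _ (haltPay_term ht)]
          by_cases htT : t ∈ T
          · cases n with
            | zero =>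
              rw [lintegral_pm_const _ t (g'.few_meas T 0) 0]
              · exact zero_le
              · intro u
                rw [few, Set.indicator_of_notMem]
                intro hu
                obtain ⟨j, hj, _⟩ := hu 0 le_rfl htT
                exact absurd hj (by omega)
            | succ m =>
              rw [kern_shift]
              have hE := H.ET htT
              have ho : A'.owner t = Player.one := by rw [H.own, H.own_T t htT]
              have hn : (σ1.resid l0).next [] t = h t := by
                have := (σ1.resid l0).valid [] t ho hE
                rw [H.E_on' t htT] at this
                exact this
              have a1 : ((H.str τ k).resid l0).resid [t] = H.str τ (k+1) := by
                simp only [Strategy.resid, Setup.str, Strategy.mk.injEq]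
                funext l s
                rw [List.singleton_append, nx_hit k l0 t l s hl0 ht]
              rw [lintegral_pm_pure _ t (h t) (by rw [kern_one hE ho, hn]) (g'.few_meas T (m+1)),
                kern_tail, a1]
              refine (lintegral_mono fun u => few_cons hE le_rfl).trans ?_
              refine (ih' m (by omega) (k+1) _ (h t) (hQ t htT)).trans ?_
              rw [ENNReal.ofReal_add (hf _) (hδ _)]
              simp only [Rof, htT, if_true]
              exact le_rfl
          · have hE' : A'.E t = ∅ := by rw [H.E_off t htT]; exact ht
            calc _ ≤ ∫⁻ u, ENNReal.ofReal (payoff A' pri' R u)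
                  ∂(pm ((kern A' σ1 (H.str τ k)).shift l0) t) :=
                  lintegral_mono (few_le n)
              _ = ENNReal.ofReal (R t) := by
                  rw [lintegral_pm_const _ t g'.measΦ (ENNReal.ofReal (R t))]
                  intro u
                  rw [payoff_cons_term hE']
              _ ≤ _ := by
                  simp only [Rof, htT, if_false]
                  exact le_self_add
    _ = ENNReal.ofReal (expReward A pri (Rof T h R f) (H.restr σ1) (τ k) s) +
        ENNReal.ofReal (ε / 2 ^ (k+1)) := by
        rw [e1, H.EL_couple g (H.restr σ1) (τ k)]
        · intro l s hl hs
          rfl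
        · intro l s hl hs
          simp only [Setup.str]
          rw [nx_no k l s hl]
          rfl
    _ ≤ _ := by
        rw [← ENNReal.ofReal_add (g.mem _ _ _).1 (hδ _)]
        apply ENNReal.ofReal_le_ofReal
        have := hτ k s hs (H.restr σ1)
        have e : ε / 2 ^ k = ε / 2 ^ (k+1) + ε / 2 ^ (k+1) := by
          rw [pow_succ]; field_simp; norm_num
        linarith

lemma Setup.upper (H : Setup A A' pri pri' T h N) {R f : S → ℝ} {N0 : ℕ}
    (hf : ∀ s, 0 ≤ f s)
    (g : Good A pri (Rof T h R f) N0) (g' : Good A' pri' R N)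
    (Q : Set S) (hQ : ∀ t ∈ T, h t ∈ Q)
    (hu : ∀ s ∈ Q, upperValue A pri (Rof T h R f) s ≤ f s) (s : S) (hs : s ∈ Q) :
    upperValue A' pri' R s ≤ f s := by
  apply le_of_forall_pos_le_add
  intro ε hε
  have := fun k : ℕ => g.unif_upper (ε := ε / 2 ^ (k+1)) (by positivity)
  choose τ hτ using this
  have key := H.upper_key hf g g' hε Q hQ τ
    (fun k s hs σ1 => (hτ k s σ1).trans (by have := hu s hs; linarith))
  refine upper_le (g'.mem s) (H.str τ 0) fun σ1 => ?_
  rw [← ENNReal.ofReal_le_ofReal_iff (by have := hf s; linarith), ← g'.EL_eq, EL]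
  calc _ ≤ ∫⁻ u, ⨆ n, few A' pri' R T n u ∂(pm (kern A' σ1 (H.str τ 0)) s) :=
        lintegral_mono (H.le_few g')
    _ = ⨆ n, ∫⁻ u, few A' pri' R T n u ∂(pm (kern A' σ1 (H.str τ 0)) s) := by
        apply lintegral_iSup (g'.few_meas T)
        intro a b hab u
        exact Set.indicator_le_indicator_of_subset (fewT_mono A' T hab) (fun _ => zero_le) u
    _ ≤ _ := by
        refine iSup_le fun n => (key n 0 σ1 s hs).trans ?_
        simp

end MuCaseHelpers6

section MuCaseHelpers7

lemma varInfo_succ {L : Type} (G : pLmu L) (Y : ℕ) : ∀ d,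
    pLmu.varInfo G (d+1) Y = (pLmu.varInfo G d Y).map (fun x => (x.1 + 1, x.2)) := by
  induction G with
  | var Z => intro d; rfl
  | dia a G ih => intro d; simp only [pLmu.varInfo]; exact ih _
  | box a G ih => intro d; simp only [pLmu.varInfo]; exact ih _
  | or G H ih1 ih2 =>
    intro d; simp only [pLmu.varInfo]; rw [ih1 (d+1), ih2 (d+1)]
    cases pLmu.varInfo G (d+1) Y <;> simp
  | and G H ih1 ih2 =>
    intro d; simp only [pLmu.varInfo]; rw [ih1 (d+1), ih2 (d+1)]
    cases pLmu.varInfo G (d+1) Y <;> simp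
  | mu Z G ih =>
    intro d; simp only [pLmu.varInfo]; split_ifs
    · rfl
    · exact ih _
  | nu Z G ih =>
    intro d; simp only [pLmu.varInfo]; split_ifs
    · rfl
    · exact ih _

lemma varInfo_none {L : Type} (G : pLmu L) {Y : ℕ} (hY : Y ∉ G.binders) : ∀ d,
    pLmu.varInfo G d Y = none := by
  induction G with
  | var Z => intro d; rfl
  | dia a G ih => intro d; exact ih hY _
  | box a G ih => intro d; exact ih hY _
  | or G H ih1 ih2 =>
    simp only [pLmu.binders, List.mem_append, not_or] at hY
    intro d; simp only [pLmu.varInfo]; rw [ih1 hY.1, ih2 hY.2]; rfl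
  | and G H ih1 ih2 =>
    simp only [pLmu.binders, List.mem_append, not_or] at hY
    intro d; simp only [pLmu.varInfo]; rw [ih1 hY.1, ih2 hY.2]; rfl
  | mu Z G ih =>
    simp only [pLmu.binders, List.mem_cons, not_or] at hY
    intro d; simp only [pLmu.varInfo]; rw [if_neg (Ne.symm hY.1), ih hY.2]
  | nu Z G ih =>
    simp only [pLmu.binders, List.mem_cons, not_or] at hY
    intro d; simp only [pLmu.varInfo]; rw [if_neg (Ne.symm hY.1), ih hY.2]

lemma bodyOf_none {L : Type} (G : pLmu L) {Y : ℕ} (hY : Y ∉ G.binders) :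
    pLmu.bodyOf G Y = none := by
  induction G with
  | var Z => rfl
  | dia a G ih => exact ih hY
  | box a G ih => exact ih hY
  | or G H ih1 ih2 =>
    simp only [pLmu.binders, List.mem_append, not_or] at hY
    simp only [pLmu.bodyOf]; rw [ih1 hY.1, ih2 hY.2]; rfl
  | and G H ih1 ih2 =>
    simp only [pLmu.binders, List.mem_append, not_or] at hY
    simp only [pLmu.bodyOf]; rw [ih1 hY.1, ih2 hY.2]; rfl
  | mu Z G ih =>
    simp only [pLmu.binders, List.mem_cons, not_or] at hY
    simp only [pLmu.bodyOf]; rw [if_neg (Ne.symm hY.1), ih hY.2]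
  | nu Z G ih =>
    simp only [pLmu.binders, List.mem_cons, not_or] at hY
    simp only [pLmu.bodyOf]; rw [if_neg (Ne.symm hY.1), ih hY.2]

variable {L P : Type}

lemma gamePri_le (F : pLmu L) (s : GState L P) : gamePri F s ≤ 2 * F.size + 1 := by
  obtain ⟨s | s, G⟩ := s
  · cases G with
    | var Y =>
      simp only [gamePri]
      rcases pLmu.varInfo F 0 Y with _ | ⟨d, _ | _⟩ <;> simp only <;> omega
    | _ => exact Nat.zero_le _
  · exact Nat.zero_le _

lemma gameR_mem (F : pLmu L) (ρ : ℕ → P → unitInterval) (s : GState L P) :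
    0 ≤ gameR F ρ s ∧ gameR F ρ s ≤ 1 := by
  obtain ⟨s | s, G⟩ := s
  · cases G with
    | var Y => exact (ρ Y s).2
    | _ => simp [gameR]
  · simp [gameR]

lemma gameArena_wf (M : PLTS L P) (F : pLmu L) : (gameArena M F).Wellformed := by
  rintro ⟨s | d, G⟩ hs
  · exfalso
    cases G with
    | var Y =>
      simp only [gameArena] at hs
      rcases hv : pLmu.varInfo F 0 Y with _ | ⟨d, _ | _⟩ <;> simp [hv] at hs
    | _ => simp [gameArena] at hs
  · let i : P → GState L P := fun q => (Sum.inl q, G)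
    have hi : Function.Injective i := by
      intro a b hab
      simpa [i] using hab
    have h0 : ∀ t, t ∉ Set.range i → (gameArena M F).prob (Sum.inr d, G) t = 0 := by
      rintro ⟨q | d', G'⟩ ht
      · simp only [gameArena]
        rw [if_neg]
        rintro rfl
        exact ht ⟨q, rfl⟩
      · rfl
    have h1 : ∀ q, (gameArena M F).prob (Sum.inr d, G) (i q) = d.f q := by
      intro q
      simp [gameArena, i]
    refine ⟨?_, ?_, ?_⟩
    · intro t
      by_cases ht : t ∈ Set.range i
      · obtain ⟨q, rfl⟩ := ht
        rw [h1]; exact d.nonneg q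
      · rw [h0 t ht]
    · rw [← hi.hasSum_iff h0]
      have : (gameArena M F).prob (Sum.inr d, G) ∘ i = d.f := funext h1
      rw [this]
      exact d.sum_one
    · ext t
      change t ∈ i '' Function.support d.f ↔ _
      by_cases ht : t ∈ Set.range i
      · obtain ⟨q, rfl⟩ := ht
        rw [hi.mem_set_image, Function.mem_support, Function.mem_support, h1]
      · rw [Function.mem_support, h0 t ht]
        simp only [ne_eq, not_true_eq_false, iff_false]
        rintro ⟨q, _, rfl⟩
        exact ht ⟨q, rfl⟩

lemma game_good (M : PLTS L P) (F : pLmu L) (ρ : ℕ → P → unitInterval) :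
    Good (gameArena M F) (gamePri F) (gameR F ρ) (2 * F.size + 1) :=
  ⟨gameArena_wf M F, gamePri_le F, gameR_mem F ρ⟩

def muT (L P : Type) (X : ℕ) : Set (GState L P) := {s | ∃ q, s = (Sum.inl q, pLmu.var X)}

def muH (G : pLmu L) : GState L P → GState L P := fun s => (s.1, G)

lemma game_setup (M : PLTS L P) (G : pLmu L) (X : ℕ) (hX : X ∉ G.binders) :
    Setup (gameArena M G) (gameArena M (pLmu.mu X G)) (gamePri G) (gamePri (pLmu.mu X G))
      (muT L P X) (muH G) (2 * (pLmu.mu X G).size + 1) where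
  own := by
    rintro ⟨s | d, H⟩
    · cases H with
      | var Y =>
        simp only [gameArena, pLmu.varInfo]
        split_ifs with hY
        · subst hY
          rw [varInfo_none G hX]
        · rw [varInfo_succ]
          rcases pLmu.varInfo G 0 Y with _ | ⟨d, _ | _⟩ <;> simp
      | _ => rfl
    · rfl
  prob s := rfl
  E_off := by
    rintro ⟨s | d, H⟩ hs
    · cases H with
      | var Y =>
        have hY : X ≠ Y := by
          rintro rfl
          exact hs ⟨s, rfl⟩
        simp only [gameArena, pLmu.bodyOf]
        rw [if_neg hY]
      | _ => rfl
    · rfl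
  E_on := by
    rintro _ ⟨q, rfl⟩
    simp only [gameArena]
    rw [bodyOf_none G hX]
  E_on' := by
    rintro _ ⟨q, rfl⟩
    simp only [gameArena, pLmu.bodyOf]
    rw [if_pos trivial]
    rfl
  own_T := by
    rintro _ ⟨q, rfl⟩
    simp only [gameArena]
    rw [varInfo_none G hX]
  pri_off := by
    rintro ⟨s | d, H⟩ hs
    · cases H with
      | var Y =>
        have hY : X ≠ Y := by
          rintro rfl
          exact hs ⟨s, rfl⟩
        simp only [gamePri, pLmu.varInfo]
        rw [if_neg hY, varInfo_succ]
        rcases pLmu.varInfo G 0 Y with _ | ⟨d, _ | _⟩ <;> simp [pLmu.size]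
      | _ => rfl
    · rfl
  pri_on := by
    rintro _ ⟨q, rfl⟩
    simp [gamePri, pLmu.varInfo]
  odd := by simp

lemma gameR_Rof (G : pLmu L) (X : ℕ) (ρ : ℕ → P → unitInterval) (g : P → unitInterval)
    (f : GState L P → ℝ) (hf : ∀ q, f (Sum.inl q, G) = g q) :
    gameR G (Function.update ρ X g) =
      Rof (muT L P X) (muH G) (gameR (pLmu.mu X G) ρ) f := by
  funext s
  unfold Rof
  split_ifs with hs
  · obtain ⟨q, rfl⟩ := hs
    simp [gameR, muH, hf]
  · obtain ⟨s | d, H⟩ := s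
    · cases H with
      | var Y =>
        have hY : Y ≠ X := by
          rintro rfl
          exact hs ⟨s, rfl⟩
        simp [gameR, hY]
      | _ => rfl
    · rfl

end MuCaseHelpers7

/-- **Inductive step for the least fixed point case** of the equivalence of the
denotational and game semantics of pLμ: assuming the equivalence for the body `G₁`
(under every interpretation), the equivalence holds for `μX.G₁`. -/
theorem mu_case_of_main_theorem {L P : Type} [Countable L]
    (M : PLTS L P) (G₁ : pLmu L) (X : ℕ) (hF : (pLmu.mu X G₁).NormalForm)
    (IH : ∀ (ρ' : ℕ → P → unitInterval) (q : P),
      (pLmu.sem M G₁ ρ' q : ℝ) =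
          lowerValue (gameArena M G₁) (gamePri G₁) (gameR G₁ ρ') (Sum.inl q, G₁) ∧
        lowerValue (gameArena M G₁) (gamePri G₁) (gameR G₁ ρ') (Sum.inl q, G₁) =
          upperValue (gameArena M G₁) (gamePri G₁) (gameR G₁ ρ') (Sum.inl q, G₁))
    (ρ : ℕ → P → unitInterval) (p : P) :
    (pLmu.sem M (pLmu.mu X G₁) ρ p : ℝ) =
        lowerValue (gameArena M (pLmu.mu X G₁)) (gamePri (pLmu.mu X G₁))
          (gameR (pLmu.mu X G₁) ρ) (Sum.inl p, pLmu.mu X G₁) ∧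
      lowerValue (gameArena M (pLmu.mu X G₁)) (gamePri (pLmu.mu X G₁))
          (gameR (pLmu.mu X G₁) ρ) (Sum.inl p, pLmu.mu X G₁) =
        upperValue (gameArena M (pLmu.mu X G₁)) (gamePri (pLmu.mu X G₁))
          (gameR (pLmu.mu X G₁) ρ) (Sum.inl p, pLmu.mu X G₁) := by
  have hX : X ∉ G₁.binders := by
    have := hF.1
    simp only [pLmu.binders, List.nodup_cons] at this
    exact this.1
  have H := game_setup M G₁ X hX
  have g' := game_good M (pLmu.mu X G₁) ρ
  have hE : (gameArena M (pLmu.mu X G₁)).E (Sum.inl p, pLmu.mu X G₁) = {(Sum.inl p, G₁)} := rfl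
  have hlow : (pLmu.sem M (pLmu.mu X G₁) ρ p : ℝ) ≤
      lowerValue (gameArena M (pLmu.mu X G₁)) (gamePri (pLmu.mu X G₁))
          (gameR (pLmu.mu X G₁) ρ) (Sum.inl p, pLmu.mu X G₁) := by
    refine le_trans ?_ (g'.start_lower rfl hE)
    let v : P → unitInterval := fun q =>
      ⟨lowerValue (gameArena M (pLmu.mu X G₁)) (gamePri (pLmu.mu X G₁))
          (gameR (pLmu.mu X G₁) ρ) (Sum.inl q, G₁), lower_mem (g'.mem _)⟩
    have hR := gameR_Rof G₁ X ρ v (lowerValue (gameArena M (pLmu.mu X G₁))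
      (gamePri (pLmu.mu X G₁)) (gameR (pLmu.mu X G₁) ρ)) (fun q => rfl)
    have g := game_good M G₁ (Function.update ρ X v)
    have hv : pLmu.sem M G₁ (Function.update ρ X v) ≤ v := by
      intro q
      rw [← Subtype.coe_le_coe, (IH _ q).1]
      rw [hR] at g ⊢
      exact H.lower g g' _
    have : pLmu.sem M (pLmu.mu X G₁) ρ p ≤ v p := by
      simp only [pLmu.sem]
      exact (sInf_le (α := P → unitInterval) hv) p
    exact this
  have hup : upperValue (gameArena M (pLmu.mu X G₁)) (gamePri (pLmu.mu X G₁))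
          (gameR (pLmu.mu X G₁) ρ) (Sum.inl p, pLmu.mu X G₁) ≤
      (pLmu.sem M (pLmu.mu X G₁) ρ p : ℝ) := by
    refine (g'.start_upper rfl hE).trans ?_
    have key : ∀ v : P → unitInterval, pLmu.sem M G₁ (Function.update ρ X v) ≤ v → ∀ q,
        upperValue (gameArena M (pLmu.mu X G₁)) (gamePri (pLmu.mu X G₁))
          (gameR (pLmu.mu X G₁) ρ) (Sum.inl q, G₁) ≤ v q := by
      intro v hv q
      let f : GState L P → ℝ := fun s => Sum.elim (fun q => (v q : ℝ)) (fun _ => 0) s.1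
      have hR := gameR_Rof G₁ X ρ v f (fun q => rfl)
      have g := game_good M G₁ (Function.update ρ X v)
      have hu : ∀ q, upperValue (gameArena M G₁) (gamePri G₁)
          (gameR G₁ (Function.update ρ X v)) (Sum.inl q, G₁) ≤ v q := by
        intro q
        rw [← (IH _ q).2, ← (IH _ q).1]
        exact hv q
      rw [hR] at g hu
      refine H.upper (f := f) ?_ g g' {s | ∃ q, s = (Sum.inl q, G₁)} ?_ ?_ (Sum.inl q, G₁) ⟨q, rfl⟩
      · rintro ⟨q | d, G⟩
        · exact (v q).2.1
        · exact le_rfl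
      · rintro _ ⟨q, rfl⟩
        exact ⟨q, rfl⟩
      · rintro _ ⟨q, rfl⟩
        exact hu q
    let c : P → unitInterval := fun q => Set.projIcc 0 1 zero_le_one
      (upperValue (gameArena M (pLmu.mu X G₁)) (gamePri (pLmu.mu X G₁))
          (gameR (pLmu.mu X G₁) ρ) (Sum.inl q, G₁))
    have hc : c ≤ sInf {g : P → unitInterval | pLmu.sem M G₁ (Function.update ρ X g) ≤ g} := by
      refine le_sInf fun v hv q => ?_
      have := Set.monotone_projIcc (zero_le_one (α := ℝ)) (key v hv q)
      rwa [Set.projIcc_val] at this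
    have h1 : c p ≤ pLmu.sem M (pLmu.mu X G₁) ρ p := by
      simp only [pLmu.sem]
      exact hc p
    refine le_trans ?_ (Subtype.coe_le_coe.2 h1)
    have h2 : upperValue (gameArena M (pLmu.mu X G₁)) (gamePri (pLmu.mu X G₁))
          (gameR (pLmu.mu X G₁) ρ) (Sum.inl p, G₁) ≤ 1 := by
      refine upper_le (g'.mem _) (Classical.arbitrary _) fun σ1 => (g'.mem _ _ _).2
    simp only [c, Set.coe_projIcc]
    rw [min_eq_right h2]
    exact le_max_right _ _
  have hlu := lower_le_upper (g'.mem (Sum.inl p, pLmu.mu X G₁))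
  exact ⟨le_antisymm hlow (hlu.trans hup), le_antisymm hlu (hup.trans hlow)⟩
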